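/- arXiv:2207.09797 — 3 statements merged into one kernel-verified Lean document; each statement's English description precedes it below -/
import Mathlib

section
/- Let G be a finite graph with edges colored red or blue, let M0 be a perfect matching of G with the minimum number of red edges among all perfect matchings of G, and let k be an integer with r(M0) ≤ k and r(M0) ≢ k (mod 2). Then G contains a perfect matching M with r(M) ≤ k and r(M) ≡ k (mod 2) if and only if G contains an M0-alternating cycle C with w_{M0}(C) odd and w_{M0}(C) ≤ k − r(M0). Moreover, if C is such a cycle, then M0 Δ C is a perfect matching with r(M0 Δ C) ≤ k and r(M0 Δ C) ≡ k (mod 2). -/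
open Finset

/-- `M` is (the edge set of) a perfect matching of `G`: all its edges are edges of `G` and
every vertex belongs to exactly one edge of `M`. -/
def IsPM {V : Type*} [DecidableEq V] (G : SimpleGraph V) (M : Finset (Sym2 V)) : Prop :=
  ↑M ⊆ G.edgeSet ∧ ∀ v : V, ∃! e, e ∈ M ∧ v ∈ e

/-- Number of red edges in the edge set `F` (the coloring `red` marks the red edges). -/
def redCount {V : Type*} [DecidableEq V] (red : Sym2 V → Bool) (F : Finset (Sym2 V)) : ℕ :=
  (F.filter fun e => red e = true).card

/-- Number of blue edges in the edge set `F`. -/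
def blueCount {V : Type*} [DecidableEq V] (red : Sym2 V → Bool) (F : Finset (Sym2 V)) : ℕ :=
  (F.filter fun e => red e = false).card

/-- The weight `w_M(e)`: 0 for blue edges, +1 for red non-matching edges, −1 for red
matching edges. -/
def wt {V : Type*} [DecidableEq V] (red : Sym2 V → Bool) (M : Finset (Sym2 V))
    (e : Sym2 V) : ℤ :=
  if red e then (if e ∈ M then -1 else 1) else 0

/-- `w_M(F)`, the total weight of an edge set `F`. -/
def wSum {V : Type*} [DecidableEq V] (red : Sym2 V → Bool) (M F : Finset (Sym2 V)) : ℤ :=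
  ∑ e ∈ F, wt red M e

/-- A list of edges alternates with respect to the matching `M`: consecutive edges are
alternately in and out of `M`. -/
def altList {V : Type*} [DecidableEq V] (M : Finset (Sym2 V)) (l : List (Sym2 V)) : Prop :=
  l.Chain' fun e f => ¬((e ∈ M) ↔ (f ∈ M))

/-- `C` is (the edge set of) an `M`-alternating cycle in `G`: it is traced by a cycle walk
whose edges alternate (cyclically) between `M` and non-`M` edges. -/
def IsAltCycle {V : Type*} [DecidableEq V] (G : SimpleGraph V)
    (M C : Finset (Sym2 V)) : Prop :=
  ∃ (v : V) (p : G.Walk v v), p.IsCycle ∧ p.edges.toFinset = C ∧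
    altList M (p.edges ++ p.edges.take 1)

/-- `P` is (the edge set of) an `M`-alternating path in `G`. -/
def IsAltPath {V : Type*} [DecidableEq V] (G : SimpleGraph V)
    (M P : Finset (Sym2 V)) : Prop :=
  ∃ (u v : V) (p : G.Walk u v), p.IsPath ∧ p.edges.toFinset = P ∧ altList M p.edges

/-- The symmetric difference of two edge sets. -/
def sd {V : Type*} [DecidableEq V] (M M' : Finset (Sym2 V)) : Finset (Sym2 V) :=
  (M \ M') ∪ (M' \ M)

/-!
Since `r(M ∆ F) = r(M) + w_M(F)`, flipping `M0` along an `M0`-alternating cycle changes the number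
of red edges by the weight of the cycle, and minimality of `r(M0)` makes every such weight
nonnegative. For any perfect matching `M`, the set `M0 ∆ M` is a disjoint union of `M0`-alternating
cycles, whose weights add up to `r(M) - r(M0)`. If this number is odd, some cycle has odd weight,
and its weight is at most the total because the other weights are nonnegative.
-/

open SimpleGraph (fromEdgeSet)
open scoped symmDiff

section Weight

variable {V : Type*} [DecidableEq V] {red : Sym2 V → Bool} {M F : Finset (Sym2 V)}

theorem wSum_of_disjoint (h : Disjoint F M) : wSum red M F = redCount red F := by
  rw [wSum, redCount, card_filter, Nat.cast_sum]
  refine sum_congr rfl fun e he ↦ ?_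
  simp [wt, disjoint_left.1 h he]

theorem wSum_of_subset (h : F ⊆ M) : wSum red M F = -redCount red F := by
  rw [wSum, redCount, card_filter, Nat.cast_sum, ← sum_neg_distrib]
  refine sum_congr rfl fun e he ↦ ?_
  simp [wt, h he, apply_ite]

theorem wSum_union {F' : Finset (Sym2 V)} (h : Disjoint F F') :
    wSum red M (F ∪ F') = wSum red M F + wSum red M F' :=
  sum_union h

theorem redCount_union {F' : Finset (Sym2 V)} (h : Disjoint F F') :
    redCount red (F ∪ F') = redCount red F + redCount red F' := by
  simp only [redCount, filter_union, card_union_of_disjoint (disjoint_filter_filter h)]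

theorem redCount_symmDiff (red : Sym2 V → Bool) (M F : Finset (Sym2 V)) :
    (redCount red (M ∆ F) : ℤ) = redCount red M + wSum red M F := by
  have hM : redCount red M = redCount red (M \ F) + redCount red (F ∩ M) := by
    rw [← redCount_union (by rw [inter_comm]; exact disjoint_sdiff_inter M F), inter_comm,
      sdiff_union_inter]
  have hF : wSum red M F = redCount red (F \ M) - redCount red (F ∩ M) := by
    rw [← wSum_of_disjoint sdiff_disjoint, sub_eq_add_neg, ← wSum_of_subset inter_subset_right,
      ← wSum_union (disjoint_sdiff_inter F M), sdiff_union_inter]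
  have hMF : redCount red (M ∆ F) = redCount red (M \ F) + redCount red (F \ M) :=
    redCount_union disjoint_sdiff_sdiff
  omega

theorem wSum_eq_sum_parts (P : Finpartition F) :
    wSum red M F = ∑ C ∈ P.parts, wSum red M C := by
  have h := sum_biUnion (f := wt red M) P.disjoint
  rwa [P.biUnion_parts] at h

end Weight

section EdgeGraph

theorem coe_symmDiff_subset {α : Type*} [DecidableEq α] {s t : Finset α} {u : Set α}
    (hs : ↑s ⊆ u) (ht : ↑t ⊆ u) : ↑(s ∆ t) ⊆ u := by
  rw [coe_symmDiff]
  exact symmDiff_le_sup.trans (sup_le hs ht)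

variable {V : Type*}

theorem fromEdgeSet_symmDiff (s t : Set (Sym2 V)) :
    fromEdgeSet (s ∆ t) = fromEdgeSet s ∆ fromEdgeSet t := by
  simp only [symmDiff_def, Set.sup_eq_union, SimpleGraph.fromEdgeSet_union,
    SimpleGraph.fromEdgeSet_sdiff]

theorem spanningCoe_toSubgraph_eq_fromEdgeSet {G : SimpleGraph V} {u v : V} (p : G.Walk u v) :
    p.toSubgraph.spanningCoe = fromEdgeSet p.edgeSet := by
  rw [← SimpleGraph.Walk.edgeSet_toSubgraph, ← SimpleGraph.Subgraph.edgeSet_spanningCoe,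
    SimpleGraph.fromEdgeSet_edgeSet]

theorem isPM_iff [DecidableEq V] {G : SimpleGraph V} {M : Finset (Sym2 V)} :
    IsPM G M ↔ ↑M ⊆ G.edgeSet ∧
      (⊤ : (fromEdgeSet (M : Set (Sym2 V))).Subgraph).IsPerfectMatching := by
  rw [SimpleGraph.Subgraph.isPerfectMatching_iff]
  refine and_congr_right fun hMG ↦ forall_congr' fun v ↦ ?_
  have hadj (w : V) : (fromEdgeSet (M : Set (Sym2 V))).Adj v w ↔ s(v, w) ∈ M := by
    rw [SimpleGraph.fromEdgeSet_adj, mem_coe, and_iff_left_of_imp]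
    exact fun h ↦ G.ne_of_adj (hMG h)
  simp only [SimpleGraph.Subgraph.top_adj, hadj]
  constructor
  · rintro ⟨_, ⟨he, w, rfl⟩, huniq⟩
    exact ⟨w, he, fun x hx ↦ Sym2.congr_right.1 (huniq _ ⟨hx, Sym2.mem_mk_left v x⟩)⟩
  · rintro ⟨w, hw, huniq⟩
    refine ⟨s(v, w), ⟨hw, Sym2.mem_mk_left v w⟩, ?_⟩
    rintro _ ⟨he, x, rfl⟩
    rw [huniq x he]

end EdgeGraph

section AltCycle

variable {V : Type*} [DecidableEq V] {G H : SimpleGraph V} {M C : Finset (Sym2 V)}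

theorem IsAltCycle.mono (hGH : G ≤ H) (hC : IsAltCycle G M C) : IsAltCycle H M C := by
  obtain ⟨v, p, hp, rfl, halt⟩ := hC
  refine ⟨v, p.mapLe hGH, hp.mapLe hGH, ?_⟩
  rw [SimpleGraph.Walk.edges_mapLe_eq_edges]
  exact ⟨rfl, halt⟩

theorem IsAltCycle.nonempty (hC : IsAltCycle G M C) : C.Nonempty := by
  obtain ⟨v, p, hp, rfl, -⟩ := hC
  rw [List.toFinset_nonempty_iff, Ne, SimpleGraph.Walk.edges_eq_nil]
  exact hp.not_nil

theorem IsAltCycle.subset_edgeSet (hC : IsAltCycle G M C) : ↑C ⊆ G.edgeSet := by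
  obtain ⟨v, p, -, rfl, -⟩ := hC
  rw [SimpleGraph.Walk.coe_edges_toFinset]
  exact fun e he ↦ p.edges_subset_edgeSet he

theorem IsAltCycle.isCycles (hC : IsAltCycle G M C) :
    (fromEdgeSet (C : Set (Sym2 V))).IsCycles := by
  obtain ⟨v, p, hp, rfl, -⟩ := hC
  rw [SimpleGraph.Walk.coe_edges_toFinset, ← spanningCoe_toSubgraph_eq_fromEdgeSet]
  exact hp.isCycles_spanningCoe_toSubgraph

theorem altList_append_take_one_iff_chain {l : List (Sym2 V)} :
    altList M (l ++ l.take 1) ↔ Cycle.Chain (fun e f ↦ ¬(e ∈ M ↔ f ∈ M)) (l : Cycle (Sym2 V)) := by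
  cases l with
  | nil => exact iff_of_true List.IsChain.nil (Cycle.Chain.nil _)
  | cons e l => rfl

theorem altList_append_take_one_of_isRotated {l l' : List (Sym2 V)} (hll' : l ~r l')
    (hl : altList M (l ++ l.take 1)) : altList M (l' ++ l'.take 1) := by
  rw [altList_append_take_one_iff_chain] at hl ⊢
  rwa [← Cycle.coe_eq_coe.2 hll']

theorem snd_mem_iff_penultimate_notMem_of_altList {v : V} {p : G.Walk v v} (hp : ¬p.Nil)
    (halt : altList M (p.edges ++ p.edges.take 1)) :
    s(v, p.snd) ∈ M ↔ s(v, p.penultimate) ∉ M := by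
  have hne : p.edges ≠ [] := SimpleGraph.Walk.edges_eq_nil.not.2 hp
  have hlast_head : ¬(p.edges.getLast hne ∈ M ↔ p.edges.head hne ∈ M) :=
    (List.isChain_append.1 halt).2.2 _ (List.getLast_mem_getLast? hne) _
      (by simp [List.head?_take, List.head?_eq_some_head hne])
  rw [SimpleGraph.Walk.getLast_edges_eq_mk_penultimate_end,
    SimpleGraph.Walk.head_edges_eq_mk_start_snd, Sym2.eq_swap] at hlast_head
  tauto

theorem IsAltCycle.isAlternating (hC : IsAltCycle G M C) :
    (fromEdgeSet (C : Set (Sym2 V))).IsAlternating (fromEdgeSet (M : Set (Sym2 V))) := by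
  obtain ⟨u, p, hp, rfl, halt⟩ := hC
  intro v w w' hww' hvw hvw'
  have hv : v ∈ p.support :=
    p.fst_mem_support_of_mem_edges (List.mem_toFinset.1 (SimpleGraph.fromEdgeSet_adj _ |>.1 hvw).1)
  have hrot := p.rotate_edges v hv
  have hneighbor {x : V} (hvx : s(v, x) ∈ p.edges) :
      x = (p.rotate v hv).snd ∨ x = (p.rotate v hv).penultimate := by
    have hx : x ∈ (p.rotate v hv).toSubgraph.neighborSet v := by
      rwa [SimpleGraph.Subgraph.mem_neighborSet, SimpleGraph.Walk.adj_toSubgraph_iff_mem_edges,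
        hrot.mem_iff]
    rwa [(hp.rotate hv).neighborSet_toSubgraph_endpoint] at hx
  have hends := snd_mem_iff_penultimate_notMem_of_altList (hp.rotate hv).not_nil
    (altList_append_take_one_of_isRotated hrot.symm halt)
  simp only [SimpleGraph.fromEdgeSet_adj, mem_coe, List.mem_toFinset] at hvw hvw' ⊢
  rcases hneighbor hvw.1 with rfl | rfl <;> rcases hneighbor hvw'.1 with rfl | rfl <;> tauto

theorem altList_edges_of_isAlternating (halt : G.IsAlternating (fromEdgeSet (M : Set (Sym2 V))))
    {u v : V} (p : G.Walk u v) (hp : p.edges.IsChain (· ≠ ·)) : altList M p.edges := by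
  induction p with
  | nil => exact List.IsChain.nil
  | @cons a b c hab p ih =>
    cases p with
    | nil => exact List.IsChain.singleton _
    | @cons _ d _ hbd p =>
      rw [SimpleGraph.Walk.edges_cons, SimpleGraph.Walk.edges_cons, List.isChain_cons_cons] at hp
      refine List.IsChain.cons_cons ?_ (ih hp.2)
      have had : a ≠ d := by
        rintro rfl
        exact hp.1 Sym2.eq_swap
      have h := halt had hab.symm hbd
      simp only [SimpleGraph.fromEdgeSet_adj, mem_coe, and_iff_left hab.ne', and_iff_left hbd.ne,
        Sym2.eq_swap (a := b) (b := a)] at h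
      change ¬(s(a, b) ∈ M ↔ s(b, d) ∈ M)
      tauto

theorem isAltCycle_of_isAlternating (halt : G.IsAlternating (fromEdgeSet (M : Set (Sym2 V))))
    {v : V} {p : G.Walk v v} (hp : p.IsCycle) : IsAltCycle G M p.edges.toFinset := by
  have hne : p.edges ≠ [] := SimpleGraph.Walk.edges_eq_nil.not.2 hp.not_nil
  have hhead : p.edges.take 1 = [s(v, p.snd)] := by
    rw [List.take_one, List.head?_eq_some_head hne, SimpleGraph.Walk.head_edges_eq_mk_start_snd,
      Option.toList_some]
  have hedges : p.edges ++ p.edges.take 1 = (p.concat (p.adj_snd hp.not_nil)).edges := by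
    rw [SimpleGraph.Walk.edges_concat, List.concat_eq_append, hhead]
  have hlast_ne_head : p.edges.getLast hne ≠ s(v, p.snd) := by
    rw [← SimpleGraph.Walk.head_edges_eq_mk_start_snd hne, ne_comm, Ne,
      hp.edges_nodup.head_eq_getLast_iff]
    rintro ⟨e, he⟩
    have hlen : p.length = 1 := by rw [← p.length_edges, he, List.length_singleton]
    have := hp.three_le_length
    omega
  refine ⟨v, p, hp, rfl, hedges ▸ altList_edges_of_isAlternating halt _ ?_⟩
  rw [← hedges, hhead, List.isChain_append]
  refine ⟨hp.edges_nodup.isChain, List.IsChain.singleton _, ?_⟩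
  simpa [List.getLast?_eq_some_getLast hne] using hlast_ne_head

end AltCycle

section SymmDiff

variable {V : Type*} [DecidableEq V] {G : SimpleGraph V} {M M' C : Finset (Sym2 V)}

theorem IsPM.symmDiff (hM : IsPM G M) (hC : IsAltCycle G M C) : IsPM G (M ∆ C) := by
  refine isPM_iff.2 ⟨coe_symmDiff_subset hM.1 hC.subset_edgeSet, ?_⟩
  have halt := hC.isAlternating
  rw [← SimpleGraph.Subgraph.spanningCoe_top (G := fromEdgeSet (M : Set (Sym2 V)))] at halt
  have h := (isPM_iff.1 hM).2.symmDiff_of_isAlternating halt hC.isCycles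
  rwa [SimpleGraph.Subgraph.spanningCoe_top, ← fromEdgeSet_symmDiff, ← coe_symmDiff] at h

theorem IsPM.exists_isAltCycle_subset_symmDiff [Finite V] (hM : IsPM G M) (hM' : IsPM G M')
    (hne : M ≠ M') : ∃ C ⊆ M ∆ M', IsAltCycle G M C ∧ IsAltCycle G M' C := by
  have hsub : ↑(M ∆ M') ⊆ G.edgeSet := coe_symmDiff_subset hM.1 hM'.1
  have hle : fromEdgeSet (↑(M ∆ M') : Set (Sym2 V)) ≤ G :=
    (SimpleGraph.fromEdgeSet_le G).2 (Set.sdiff_subset.trans hsub)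
  have hspan : (⊤ : (fromEdgeSet (M : Set (Sym2 V))).Subgraph).spanningCoe ∆
      (⊤ : (fromEdgeSet (M' : Set (Sym2 V))).Subgraph).spanningCoe = fromEdgeSet ↑(M ∆ M') := by
    rw [SimpleGraph.Subgraph.spanningCoe_top, SimpleGraph.Subgraph.spanningCoe_top,
      ← fromEdgeSet_symmDiff, coe_symmDiff]
  have hcycles := (isPM_iff.1 hM).2.symmDiff_isCycles (isPM_iff.1 hM').2
  have halt := (isPM_iff.1 hM).2.isAlternating_symmDiff_left (isPM_iff.1 hM').2
  have halt' := (isPM_iff.1 hM).2.isAlternating_symmDiff_right (isPM_iff.1 hM').2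
  rw [hspan] at hcycles halt halt'
  rw [SimpleGraph.Subgraph.spanningCoe_top] at halt halt'
  obtain ⟨⟨a, b⟩, he⟩ : (M ∆ M').Nonempty := symmDiff_nonempty.2 hne
  obtain ⟨p, hp, -⟩ := hcycles.exists_cycle_toSubgraph_verts_eq_connectedComponentSupp
    SimpleGraph.ConnectedComponent.connectedComponentMk_mem
    ⟨b, SimpleGraph.fromEdgeSet_adj _ |>.2 ⟨he, G.ne_of_adj (hsub he)⟩⟩
  refine ⟨p.edges.toFinset, fun e hep ↦ ?_, (isAltCycle_of_isAlternating halt hp).mono hle,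
    (isAltCycle_of_isAlternating halt' hp).mono hle⟩
  have := p.edges_subset_edgeSet (List.mem_toFinset.1 hep)
  rw [SimpleGraph.edgeSet_fromEdgeSet] at this
  exact this.1

theorem IsPM.exists_finpartition_symmDiff_isAltCycle [Finite V] (hM : IsPM G M)
    (hM' : IsPM G M') : ∃ P : Finpartition (M ∆ M'), ∀ C ∈ P.parts, IsAltCycle G M C := by
  induction hS : M ∆ M' using Finset.strongInduction generalizing M' with
  | H S ih =>
    subst hS
    by_cases hne : M = M'
    · subst hne
      rw [symmDiff_self]
      exact ⟨Finpartition.empty _, by simp⟩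
    obtain ⟨C, hsub, hC, hC'⟩ := hM.exists_isAltCycle_subset_symmDiff hM' hne
    have hsdiff : M ∆ (M' ∆ C) = (M ∆ M') \ C := by
      rw [← symmDiff_assoc, symmDiff_of_ge hsub]
    obtain ⟨P, hP⟩ := ih _ (sdiff_ssubset hsub hC.nonempty) (hM'.symmDiff hC') hsdiff
    refine ⟨P.extend hC.nonempty.ne_empty sdiff_disjoint (sdiff_sup_cancel hsub), ?_⟩
    simpa [hC] using hP

theorem IsPM.exists_odd_isAltCycle_of_redCount_le [Finite V] {red : Sym2 V → Bool} (hM : IsPM G M)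
    (hmin : ∀ N, IsPM G N → redCount red M ≤ redCount red N) (hM' : IsPM G M')
    (hodd : Odd ((redCount red M' : ℤ) - redCount red M)) :
    ∃ C, IsAltCycle G M C ∧ Odd (wSum red M C) ∧
      wSum red M C ≤ (redCount red M' : ℤ) - redCount red M := by
  obtain ⟨P, hP⟩ := hM.exists_finpartition_symmDiff_isAltCycle hM'
  have hsum : (redCount red M' : ℤ) - redCount red M = ∑ C ∈ P.parts, wSum red M C := by
    rw [← wSum_eq_sum_parts, sub_eq_iff_eq_add', ← redCount_symmDiff, symmDiff_symmDiff_cancel_left]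
  have hnonneg : ∀ C ∈ P.parts, 0 ≤ wSum red M C := fun C hC ↦ by
    have h := hmin _ (hM.symmDiff (hP C hC))
    have h' := redCount_symmDiff red M C
    omega
  rw [hsum] at hodd ⊢
  obtain ⟨C, hC, hCodd⟩ : ∃ C ∈ P.parts, Odd (wSum red M C) := by
    by_contra! heven
    simp only [Int.not_odd_iff_even, even_iff_two_dvd] at heven
    exact Int.not_even_iff_odd.2 hodd (even_iff_two_dvd.2 (dvd_sum heven))
  exact ⟨C, hP C hC, hCodd, single_le_sum hnonneg hC⟩

end SymmDiff

/-- Let `M0` be a perfect matching of `G` with the minimum number of red edges and let `k`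
be an integer with `r(M0) ≤ k` and `r(M0) ≢ k (mod 2)`. Then `G` has a perfect matching `M`
with `r(M) ≤ k` and `r(M) ≡ k (mod 2)` iff `G` has an `M0`-alternating cycle `C` with
`w_{M0}(C)` odd and `w_{M0}(C) ≤ k − r(M0)`; moreover for any such cycle `C` the perfect
matching `M0 Δ C` satisfies `r(M0 Δ C) ≤ k` and `r(M0 Δ C) ≡ k (mod 2)`. -/
theorem exists_pm_le_k_correct_parity_iff_odd_cycle
    {V : Type*} [Fintype V] [DecidableEq V] (G : SimpleGraph V) (red : Sym2 V → Bool)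
    (M0 : Finset (Sym2 V)) (k : ℤ)
    (hM0 : IsPM G M0)
    (hmin : ∀ M : Finset (Sym2 V), IsPM G M → redCount red M0 ≤ redCount red M)
    (hk : (redCount red M0 : ℤ) ≤ k)
    (hpar : ¬ ((redCount red M0 : ℤ) ≡ k [ZMOD 2])) :
    ((∃ M : Finset (Sym2 V), IsPM G M ∧ (redCount red M : ℤ) ≤ k ∧
        (redCount red M : ℤ) ≡ k [ZMOD 2]) ↔
      (∃ C : Finset (Sym2 V), IsAltCycle G M0 C ∧ Odd (wSum red M0 C) ∧
        wSum red M0 C ≤ k - (redCount red M0 : ℤ))) ∧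
    (∀ C : Finset (Sym2 V), IsAltCycle G M0 C → Odd (wSum red M0 C) →
      wSum red M0 C ≤ k - (redCount red M0 : ℤ) →
        IsPM G (sd M0 C) ∧ (redCount red (sd M0 C) : ℤ) ≤ k ∧
          (redCount red (sd M0 C) : ℤ) ≡ k [ZMOD 2]) := by
  have hflip : ∀ C : Finset (Sym2 V), IsAltCycle G M0 C → Odd (wSum red M0 C) →
      wSum red M0 C ≤ k - (redCount red M0 : ℤ) →
        IsPM G (sd M0 C) ∧ (redCount red (sd M0 C) : ℤ) ≤ k ∧
          (redCount red (sd M0 C) : ℤ) ≡ k [ZMOD 2] := fun C hC hodd hle ↦ by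
    have hcount : (redCount red (sd M0 C) : ℤ) = redCount red M0 + wSum red M0 C :=
      redCount_symmDiff red M0 C
    refine ⟨hM0.symmDiff hC, by omega, ?_⟩
    grind [Int.ModEq]
  refine ⟨⟨?_, fun ⟨C, hC, hodd, hle⟩ ↦ ⟨sd M0 C, hflip C hC hodd hle⟩⟩, hflip⟩
  rintro ⟨M, hM, hMk, hMpar⟩
  have hodd : Odd ((redCount red M : ℤ) - redCount red M0) := by
    grind [Int.ModEq]
  obtain ⟨C, hC, hCodd, hCle⟩ := hM0.exists_odd_isAltCycle_of_redCount_le hmin hM hodd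
  exact ⟨C, hC, hCodd, by omega⟩
end

section
/- Let t ≥ 1 be an integer, M a perfect matching of G, and 𝒞 a set of vertex-disjoint M-alternating cycles with the following properties: (i) 𝒞 contains no monochromatic cycle; (ii) the total number of edges of the cycles in 𝒞 is at least 2t³; (iii) the cycles in 𝒞 contain at most t red edges in total. Then the union of the cycles of 𝒞 contains a blue M-alternating path of length at least t. Symmetrically, if instead the cycles in 𝒞 contain at most t blue edges in total (with (i) and (ii) unchanged), then the union of the cycles of 𝒞 contains a red M-alternating path of length at least t. -/
open Finset

/-- The set of vertices covered by an edge set. -/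
def edgeVerts {V : Type*} (F : Finset (Sym2 V)) : Set V := {v | ∃ e ∈ F, v ∈ e}

/-- `𝒞` is a set of pairwise vertex-disjoint `M`-alternating cycles of `G`. -/
def IsAltCycleSet {V : Type*} [DecidableEq V] (G : SimpleGraph V) (M : Finset (Sym2 V))
    (𝒞 : Finset (Finset (Sym2 V))) : Prop :=
  (∀ C ∈ 𝒞, IsAltCycle G M C) ∧
    (𝒞 : Set (Finset (Sym2 V))).Pairwise fun C C' => Disjoint (edgeVerts C) (edgeVerts C')

/-!
An `M`-alternating cycle `C` with `r ≥ 1` red edges becomes an alternating path after deleting one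
of them, and the other `r - 1` cut this path into `r` blue segments. If `r * t < #C`, the
segments have at least `r * t - (r - 1)` edges in total, so one of them has at least `t`. As the
cycles are edge-disjoint, `#red * t < #edges` for the whole family forces the same inequality on
some member; with at most `t` red edges it holds because `t * t < 2 * t ^ 3`.
-/

theorem exists_infix_length_eq_forall_eq_false {α : Type*} (b : α → Bool) (t : ℕ) (l : List α)
    (hl : (l.countP b + 1) * t ≤ l.length) :
    ∃ s, s <:+: l ∧ s.length = t ∧ ∀ a ∈ s, b a = false := by
  have ht : t ≤ l.length := (Nat.le_mul_of_pos_left t (Nat.succ_pos _)).trans hl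
  by_cases hfree : ∀ a ∈ l.take t, b a = false
  · exact ⟨l.take t, (l.take_prefix t).isInfix, List.length_take_of_le ht, hfree⟩
  · have hhead : 0 < (l.take t).countP b := by simpa [List.countP_pos_iff] using hfree
    have hsplit : l.countP b = (l.take t).countP b + (l.drop t).countP b := by
      rw [← List.countP_append, List.take_append_drop]
    have htail : ((l.drop t).countP b + 1) * t ≤ (l.drop t).length := by
      rw [List.length_drop]
      refine Nat.le_sub_of_add_le ?_
      calc ((l.drop t).countP b + 1) * t + t = ((l.drop t).countP b + 1 + 1) * t := by ring
        _ ≤ (l.countP b + 1) * t := Nat.mul_le_mul_right t (by omega)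
        _ ≤ l.length := hl
    obtain ⟨s, hs, hlength, hfalse⟩ := exists_infix_length_eq_forall_eq_false b t (l.drop t) htail
    exact ⟨s, hs.trans (l.drop_suffix t).isInfix, hlength, hfalse⟩
termination_by l.countP b

theorem isChain_append_take_one_iff {α : Type*} {R : α → α → Prop} {l : List α} :
    List.IsChain R (l ++ l.take 1) ↔ Cycle.Chain R (l : Cycle α) := by
  cases l with
  | nil => exact iff_of_true List.isChain_nil (Cycle.Chain.nil R)
  | cons a l => exact Iff.rfl

section Walk

variable {V : Type*} {G : SimpleGraph V}

theorem exists_isSubwalk_edges_eq_of_isInfix {u v : V} {p : G.Walk u v} {s : List (Sym2 V)}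
    (hs : s <:+: p.edges) : ∃ (a b : V) (q : G.Walk a b), q.IsSubwalk p ∧ q.edges = s := by
  obtain ⟨l, r, hlr⟩ := hs
  refine ⟨_, _, (p.drop l.length).take s.length,
    (SimpleGraph.Walk.isSubwalk_take _ _).trans (p.isSubwalk_drop _), ?_⟩
  rw [SimpleGraph.Walk.edges_take, SimpleGraph.Walk.edges_drop, ← hlr, List.append_assoc,
    List.drop_left, List.take_left]

theorem exists_isPath_cons_edges_isRotated {v : V} {p : G.Walk v v} (hp : p.IsCycle)
    {e : Sym2 V} (he : e ∈ p.edges) :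
    ∃ (a b : V) (q : G.Walk a b), q.IsPath ∧ e :: q.edges ~r p.edges := by
  obtain ⟨d, hd, rfl⟩ := List.mem_map.mp he
  obtain ⟨before, after, hsplit⟩ := (p.isSubwalk_toWalk_adj_iff_mem_darts).mpr hd
  have hsupport : p.support.tail = before.support.tail ++ after.support := by
    rw [hsplit]
    simp [SimpleGraph.Walk.support_append]
  have hedges : p.edges = before.edges ++ d.edge :: after.edges := by
    rw [hsplit]
    simp [SimpleGraph.Walk.edges_append, SimpleGraph.Dart.edge]
  refine ⟨d.snd, d.fst, after.append before, ?_, ?_⟩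
  · rw [SimpleGraph.Walk.isPath_def, SimpleGraph.Walk.support_append,
      List.perm_append_comm.nodup_iff, ← hsupport]
    exact hp.support_nodup
  · rw [hedges, SimpleGraph.Walk.edges_append, ← List.cons_append]
    exact List.isRotated_append

end Walk

section Alternating

variable {V : Type*} [DecidableEq V] {G : SimpleGraph V} {M : Finset (Sym2 V)}

theorem IsAltCycle.isAltPath_erase {C : Finset (Sym2 V)} (hC : IsAltCycle G M C) {e : Sym2 V}
    (he : e ∈ C) : IsAltPath G M (C.erase e) := by
  obtain ⟨v, p, hp, rfl, halt⟩ := hC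
  obtain ⟨a, b, q, hq, hrot⟩ := exists_isPath_cons_edges_isRotated hp (List.mem_toFinset.mp he)
  have he_notMem : e ∉ q.edges :=
    (List.nodup_cons.mp (hrot.nodup_iff.mpr hp.edges_nodup)).1
  refine ⟨a, b, q, hq, ?_, ?_⟩
  · rw [← List.toFinset_eq_of_perm _ _ hrot.perm, List.toFinset_cons,
      Finset.erase_insert (by simpa using he_notMem)]
  · have hcyclic := isChain_append_take_one_iff.mp halt
    rw [← Cycle.coe_eq_coe.mpr hrot] at hcyclic
    exact (isChain_append_take_one_iff.mpr hcyclic).infix ⟨[e], [e], by simp⟩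

theorem IsAltPath.exists_blue_isAltPath {P : Finset (Sym2 V)} (hP : IsAltPath G M P)
    {red : Sym2 V → Bool} {t : ℕ} (hcard : (redCount red P + 1) * t ≤ #P) :
    ∃ Q, IsAltPath G M Q ∧ Q ⊆ P ∧ (∀ e ∈ Q, red e = false) ∧ t ≤ #Q := by
  obtain ⟨u, v, p, hp, rfl, halt⟩ := hP
  have hnodup := hp.isTrail.edges_nodup
  have hcount : redCount red p.edges.toFinset = p.edges.countP red := by
    rw [redCount, ← List.toFinset_filter, List.toFinset_card_of_nodup (hnodup.filter _),
      List.countP_eq_length_filter]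
  rw [hcount, List.toFinset_card_of_nodup hnodup] at hcard
  obtain ⟨s, hs, rfl, hblue⟩ := exists_infix_length_eq_forall_eq_false red t p.edges hcard
  obtain ⟨a, b, q, hq, rfl⟩ := exists_isSubwalk_edges_eq_of_isInfix hs
  have hqpath := SimpleGraph.Walk.isPath_of_isSubwalk hq hp
  refine ⟨q.edges.toFinset, ⟨a, b, q, hqpath, rfl, List.IsChain.infix halt hs⟩,
    fun e he => List.mem_toFinset.mpr (hs.subset (List.mem_toFinset.mp he)),
    by simpa using hblue, ?_⟩
  exact (List.toFinset_card_of_nodup (hnodup.sublist hs.sublist)).ge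

theorem IsAltCycle.exists_blue_isAltPath {C : Finset (Sym2 V)} (hC : IsAltCycle G M C)
    {red : Sym2 V → Bool} {t : ℕ} (hnotblue : ¬ ∀ e ∈ C, red e = false)
    (hcard : redCount red C * t < #C) :
    ∃ P, IsAltPath G M P ∧ P ⊆ C ∧ (∀ e ∈ P, red e = false) ∧ t ≤ #P := by
  obtain ⟨e, heC, he⟩ : ∃ e ∈ C, red e = true := by simpa using hnotblue
  have hcount : redCount red (C.erase e) + 1 = redCount red C := by
    rw [redCount, Finset.filter_erase, redCount,
      Finset.card_erase_add_one (Finset.mem_filter.mpr ⟨heC, he⟩)]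
  have herase : (redCount red (C.erase e) + 1) * t ≤ #(C.erase e) := by
    rw [hcount, Finset.card_erase_of_mem heC]
    exact Nat.le_sub_one_of_lt hcard
  obtain ⟨P, hP, hPC, hblue, ht⟩ := (hC.isAltPath_erase heC).exists_blue_isAltPath herase
  exact ⟨P, hP, hPC.trans (C.erase_subset e), hblue, ht⟩

end Alternating

theorem disjoint_of_disjoint_edgeVerts {V : Type*} {C D : Finset (Sym2 V)}
    (h : Disjoint (edgeVerts C) (edgeVerts D)) : Disjoint C D := by
  refine Finset.disjoint_left.mpr fun e heC heD => ?_
  exact Set.disjoint_left.mp h ⟨e, heC, e.out_fst_mem⟩ ⟨e, heD, e.out_fst_mem⟩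

section Family

variable {V : Type*} [DecidableEq V] {𝒞 : Finset (Finset (Sym2 V))}

theorem redCount_biUnion (red : Sym2 V → Bool)
    (hdisj : (𝒞 : Set (Finset (Sym2 V))).PairwiseDisjoint id) :
    redCount red (𝒞.biUnion id) = ∑ C ∈ 𝒞, redCount red C := by
  rw [redCount, Finset.filter_biUnion, Finset.card_biUnion]
  · rfl
  · exact fun C hC D hD hCD => Finset.disjoint_filter_filter (hdisj hC hD hCD)

theorem redCount_not (red : Sym2 V → Bool) (F : Finset (Sym2 V)) :
    redCount (fun e => !red e) F = blueCount red F := by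
  simp [redCount, blueCount]

theorem IsAltCycleSet.pairwiseDisjoint {G : SimpleGraph V} {M : Finset (Sym2 V)}
    (h𝒞 : IsAltCycleSet G M 𝒞) : (𝒞 : Set (Finset (Sym2 V))).PairwiseDisjoint id :=
  h𝒞.2.imp fun _ _ => disjoint_of_disjoint_edgeVerts

theorem long_monochromatic_alt_path_general {G : SimpleGraph V} {M : Finset (Sym2 V)}
    {red : Sym2 V → Bool} {t : ℕ} (halt : ∀ C ∈ 𝒞, IsAltCycle G M C)
    (hdisj : (𝒞 : Set (Finset (Sym2 V))).PairwiseDisjoint id)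
    (hnotblue : ∀ C ∈ 𝒞, ¬ ∀ e ∈ C, red e = false)
    (hsize : redCount red (𝒞.biUnion id) * t < #(𝒞.biUnion id)) :
    ∃ P, IsAltPath G M P ∧ P ⊆ 𝒞.biUnion id ∧ (∀ e ∈ P, red e = false) ∧ t ≤ #P := by
  rw [redCount_biUnion red hdisj, Finset.sum_mul, Finset.card_biUnion hdisj] at hsize
  obtain ⟨C, hC, hcard⟩ := Finset.exists_lt_of_sum_lt hsize
  obtain ⟨P, hP, hPC, hblue, ht⟩ := (halt C hC).exists_blue_isAltPath (hnotblue C hC) hcard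
  exact ⟨P, hP, hPC.trans (Finset.subset_biUnion_of_mem id hC), hblue, ht⟩

end Family

/-- Let `t ≥ 1`, `M` a perfect matching and `𝒞` a set of vertex-disjoint `M`-alternating
cycles containing no monochromatic cycle whose cycles have at least `2t³` edges in total.
If the cycles of `𝒞` contain at most `t` red edges then their union contains a blue
`M`-alternating path of length at least `t`; symmetrically, if they contain at most `t`
blue edges then their union contains a red `M`-alternating path of length at least `t`. -/
theorem long_monochromatic_alt_path
    {V : Type*} [Fintype V] [DecidableEq V] (G : SimpleGraph V) (red : Sym2 V → Bool)
    (t : ℕ) (ht : 1 ≤ t) (M : Finset (Sym2 V)) (hM : IsPM G M)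
    (𝒞 : Finset (Finset (Sym2 V))) (h𝒞 : IsAltCycleSet G M 𝒞)
    (hmono : ∀ C ∈ 𝒞, ¬ ((∀ e ∈ C, red e = true) ∨ (∀ e ∈ C, red e = false)))
    (hsize : 2 * t ^ 3 ≤ (𝒞.biUnion id).card) :
    (redCount red (𝒞.biUnion id) ≤ t →
      ∃ P : Finset (Sym2 V), IsAltPath G M P ∧ P ⊆ 𝒞.biUnion id ∧
        (∀ e ∈ P, red e = false) ∧ t ≤ P.card) ∧
    (blueCount red (𝒞.biUnion id) ≤ t →
      ∃ P : Finset (Sym2 V), IsAltPath G M P ∧ P ⊆ 𝒞.biUnion id ∧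
        (∀ e ∈ P, red e = true) ∧ t ≤ P.card) := by
  have hsquare : t * t < #(𝒞.biUnion id) := by
    nlinarith [Nat.pow_le_pow_right ht (show 2 ≤ 3 by simp)]
  refine ⟨fun hcount => long_monochromatic_alt_path_general h𝒞.1 h𝒞.pairwiseDisjoint
    (fun C hC hblue => hmono C hC (.inr hblue))
    ((Nat.mul_le_mul_right t hcount).trans_lt hsquare), fun hcount => ?_⟩
  simpa using long_monochromatic_alt_path_general (red := fun e => !red e) h𝒞.1
    h𝒞.pairwiseDisjoint (fun C hC hred => hmono C hC (.inl (by simpa using hred)))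
    ((Nat.mul_le_mul_right t ((redCount_not red _).trans_le hcount)).trans_lt hsquare)
end

section
/- Let G be a graph with edges colored red or blue and independence number α = α(G), let k be a nonnegative integer such that G has a perfect matching with exactly k red edges, and let M and M' be perfect matchings of G with r(M) ≤ k ≤ r(M'). Then there exist perfect matchings M1 and M2 of G with r(M1) ≤ k ≤ r(M2), r(M1) ≡ r(M) (mod 2), r(M2) ≡ r(M') (mod 2), and r(M2) − r(M1) ≤ 16·4^α. -/
open Finset

/-- The independence number `α(G)`: the maximum size of a set of pairwise non-adjacent
vertices. -/
noncomputable def indepNum {V : Type*} (G : SimpleGraph V) : ℕ :=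
  sSup {n | ∃ s : Finset V, s.card = n ∧ (s : Set V).Pairwise fun u v => ¬ G.Adj u v}

/-!
If `r(N) - r(M) > 8 · 4^α`, then `M` can be altered, on each of two disjoint vertex sets, so that
the number of red edges increases by a positive amount, and at most by `r(N) - r(M)` even when both
alterations are made. One of the three resulting perfect matchings has as many red edges as `M`
modulo 2. Repeating this brings `M` to within `8 · 4^α` of `N`, and exchanging the colors gives the
same on the other side of `N`.

If `M ∪ N` has no alternating cycle of large gain, then two alternating cycles of positive gain
serve as the two disjoint alterations. On a cycle of large gain, a discrete intermediate value
argument finds more than `4^α` disjoint alternating paths, each beginning and ending with an edge of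
`M`, along which exchanging `M` for `N` gains exactly one red edge but leaves both ends of the path
unmatched. By Ramsey's theorem, two of these paths have adjacent first vertices and adjacent last
vertices; the two edges joining them complete the altered matching, at a gain between 2 and 4. After
discarding these two paths, enough remain to do this once more.
-/

section Ramsey

variable {ι : Type*}

lemma exists_isNClique_succ {H : SimpleGraph ι} [DecidableRel H.Adj] {S T : Finset ι} {v : ι}
    {n : ℕ} (hv : v ∈ S) (hTS : T ⊆ S.filter (H.Adj v)) (hT : H.IsNClique n T) :
    ∃ T' ⊆ S, H.IsNClique (n + 1) T' := by
  classical
  exact ⟨insert v T, insert_subset hv (hTS.trans (filter_subset _ _)),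
    hT.insert fun u hu => (mem_filter.mp (hTS hu)).2⟩

lemma card_filter_adj_add_card_filter_compl_adj [DecidableEq ι] (H : SimpleGraph ι)
    [DecidableRel H.Adj] {S : Finset ι} {v : ι} (hv : v ∈ S) :
    #(S.filter (H.Adj v)) + #(S.filter (Hᶜ.Adj v)) + 1 = #S := by
  have herase : S.filter (fun u => ¬H.Adj v u) = insert v (S.filter (Hᶜ.Adj v)) := by
    ext u
    by_cases huv : u = v <;> simp [huv, hv, Ne.symm]
  rw [← card_filter_add_card_filter_not (s := S) (H.Adj v), herase,
    card_insert_of_notMem (by simp), add_assoc]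

lemma exists_isNClique_or_isNIndepSet (H : SimpleGraph ι) (a b : ℕ) (S : Finset ι)
    (hS : 2 ^ (a + b) ≤ #S) :
    (∃ T ⊆ S, H.IsNClique (a + 1) T) ∨ ∃ T ⊆ S, H.IsNIndepSet (b + 1) T := by
  classical
  simp_rw [← SimpleGraph.isNClique_compl]
  induction hN : a + b generalizing a b S with
  | zero =>
    obtain ⟨v, hv⟩ : S.Nonempty := card_pos.mp ((pow_pos two_pos _).trans_le hS)
    obtain rfl : a = 0 := by omega
    exact .inl ⟨{v}, singleton_subset_iff.mpr hv, by simp⟩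
  | succ N ih =>
    obtain ⟨v, hv⟩ : S.Nonempty := card_pos.mp ((pow_pos two_pos _).trans_le hS)
    obtain _ | a := a
    · exact .inl ⟨{v}, singleton_subset_iff.mpr hv, by simp⟩
    obtain _ | b := b
    · exact .inr ⟨{v}, singleton_subset_iff.mpr hv, by simp⟩
    have hcard := card_filter_adj_add_card_filter_compl_adj H hv
    rw [hN, pow_succ'] at hS
    rcases (by omega : 2 ^ N ≤ #(S.filter (H.Adj v)) ∨ 2 ^ N ≤ #(S.filter (Hᶜ.Adj v)))
      with hbig | hbig
    · have hab : a + (b + 1) = N := by omega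
      exact (ih a (b + 1) _ (hab ▸ hbig) hab).imp
        (fun ⟨_, hTS, hT⟩ => exists_isNClique_succ hv hTS hT)
        (fun ⟨T, hTS, hT⟩ => ⟨T, hTS.trans (filter_subset _ _), hT⟩)
    · have hab : a + 1 + b = N := by omega
      exact (ih (a + 1) b _ (hab ▸ hbig) hab).imp
        (fun ⟨T, hTS, hT⟩ => ⟨T, hTS.trans (filter_subset _ _), hT⟩)
        (fun ⟨_, hTS, hT⟩ => exists_isNClique_succ hv hTS hT)

end Ramsey

section IndepNum

variable {V ι : Type*} (G : SimpleGraph V)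

lemma indepNum_eq_simpleGraph_indepNum : indepNum G = G.indepNum := by
  simp only [indepNum, SimpleGraph.indepNum, SimpleGraph.isNIndepSet_iff, SimpleGraph.IsIndepSet,
    and_comm]

variable [Finite V]

lemma indepNum_pos [Nonempty V] : 0 < G.indepNum := by
  obtain ⟨v⟩ := ‹Nonempty V›
  exact SimpleGraph.IsIndepSet.card_le_indepNum (t := {v}) (by simp)

lemma card_le_indepNum_of_injOn {T : Finset ι} {x : ι → V} (hx : Set.InjOn x T)
    (hindep : (T : Set ι).Pairwise fun i j => ¬G.Adj (x i) (x j)) : #T ≤ G.indepNum := by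
  classical
  rw [← card_image_of_injOn hx]
  refine SimpleGraph.IsIndepSet.card_le_indepNum ?_
  rw [coe_image]
  exact hx.pairwise_image.mpr hindep

lemma exists_adj_and_adj_of_four_pow_indepNum_le_card {S : Finset ι} {x y : ι → V}
    (hx : Set.InjOn x S) (hy : Set.InjOn y S) (hS : 4 ^ G.indepNum ≤ #S) :
    ∃ i ∈ S, ∃ j ∈ S, G.Adj (x i) (x j) ∧ G.Adj (y i) (y j) := by
  have hS' : 2 ^ (G.indepNum + G.indepNum) ≤ #S := by
    rwa [← two_mul, pow_mul]
  by_contra! hnone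
  rcases exists_isNClique_or_isNIndepSet (G.comap x) _ _ S hS' with ⟨T, hTS, hT⟩ | ⟨T, hTS, hT⟩
  · have hy_indep := card_le_indepNum_of_injOn G (hy.mono (coe_subset.mpr hTS))
      fun i hi j hj hij => hnone i (hTS hi) j (hTS hj) (hT.isClique hi hj hij)
    exact absurd hT.card_eq (by omega)
  · have hx_indep := card_le_indepNum_of_injOn G (hx.mono (coe_subset.mpr hTS)) hT.isIndepSet
    exact absurd hT.card_eq (by omega)

end IndepNum

section Intervals

lemma exists_eq_of_le_add_one {f : ℕ → ℤ} {s e : ℕ} {t : ℤ} (hse : s ≤ e)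
    (hstep : ∀ i, s ≤ i → f (i + 1) ≤ f i + 1) (hs : f s ≤ t) (he : t ≤ f e) :
    ∃ b ∈ Set.Icc s e, f b = t := by
  induction e, hse using Nat.le_induction with
  | base => exact ⟨s, ⟨le_rfl, le_rfl⟩, le_antisymm hs he⟩
  | succ e hse ih =>
    by_cases hte : t ≤ f e
    · obtain ⟨b, ⟨hsb, hbe⟩, hb⟩ := ih hte
      exact ⟨b, ⟨hsb, by omega⟩, hb⟩
    · exact ⟨e + 1, ⟨by omega, le_rfl⟩, by have := hstep e hse; omega⟩

/-- The weight of an alternating path with edges `μ a, ν a, μ (a + 1), …, ν (b - 1), μ b`,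
where the edges `ν i` count positively and the edges `μ i` negatively. -/
def pathWeight (μ ν : ℕ → ℤ) (a b : ℕ) : ℤ := ∑ i ∈ Ico a b, ν i - ∑ i ∈ Icc a b, μ i

variable {μ ν : ℕ → ℤ}

lemma sum_Ico_succ_sub_eq_pathWeight_add {a b : ℕ} (hab : a ≤ b) :
    ∑ i ∈ Ico a (b + 1), (ν i - μ i) = pathWeight μ ν a b + ν b := by
  rw [pathWeight, sum_sub_distrib, sum_Ico_succ_top hab, Ico_add_one_right_eq_Icc]
  ring

lemma pathWeight_succ {a b : ℕ} (hab : a ≤ b) :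
    pathWeight μ ν a (b + 1) = pathWeight μ ν a b + ν b - μ (b + 1) := by
  rw [pathWeight, pathWeight, sum_Ico_succ_top hab, ← insert_Icc_right_eq_Icc_add_one (by omega),
    sum_insert (by simp)]
  ring

lemma exists_pathWeight_eq_one (hμ : ∀ i, 0 ≤ μ i) (hν : ∀ i, ν i ≤ 1) {s L : ℕ}
    (hsum : 2 ≤ ∑ i ∈ Ico s L, (ν i - μ i)) :
    ∃ b, s ≤ b ∧ b < L ∧ pathWeight μ ν s b = 1 := by
  have hsL : s < L := by
    by_contra! hLs
    simp [Ico_eq_empty_of_le hLs] at hsum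
  obtain ⟨e, rfl⟩ : ∃ e, L = e + 1 := ⟨L - 1, by omega⟩
  rw [sum_Ico_succ_sub_eq_pathWeight_add (by omega)] at hsum
  obtain ⟨b, ⟨hsb, hbe⟩, hb⟩ := exists_eq_of_le_add_one (f := pathWeight μ ν s) (t := 1)
    (Nat.le_of_lt_succ hsL)
    (fun i hi => by rw [pathWeight_succ hi]; linarith [hμ (i + 1), hν i])
    (by simp only [pathWeight, Ico_self, sum_empty, Icc_self, sum_singleton]; linarith [hμ s])
    (by linarith [hν e])
  exact ⟨b, hsb, by omega, hb⟩

lemma exists_disjoint_intervals_pathWeight_eq_one (hμ : ∀ i, 0 ≤ μ i) (hν : ∀ i, ν i ≤ 1)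
    (L K s : ℕ) (hsum : 2 * (K : ℤ) ≤ ∑ i ∈ Ico s L, (ν i - μ i)) :
    ∃ S : Finset (ℕ × ℕ), #S = K ∧
      (∀ q ∈ S, s ≤ q.1 ∧ q.1 ≤ q.2 ∧ q.2 < L ∧ pathWeight μ ν q.1 q.2 = 1) ∧
      (S : Set (ℕ × ℕ)).PairwiseDisjoint fun q => Icc q.1 q.2 := by
  induction K generalizing s with
  | zero => exact ⟨∅, by simp⟩
  | succ K ih =>
    push_cast at hsum
    obtain ⟨b, hsb, hbL, hb⟩ := exists_pathWeight_eq_one hμ hν (s := s) (L := L) (by omega)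
    have hrest : 2 * (K : ℤ) ≤ ∑ i ∈ Ico (b + 1) L, (ν i - μ i) := by
      rw [← sum_Ico_consecutive _ (by omega : s ≤ b + 1) (by omega : b + 1 ≤ L),
        sum_Ico_succ_sub_eq_pathWeight_add hsb, hb] at hsum
      linarith [hν b]
    obtain ⟨S, hcard, hS, hdisj⟩ := ih (b + 1) hrest
    have hnew : (s, b) ∉ S := fun hmem => by have := (hS _ hmem).1; omega
    refine ⟨insert (s, b) S, by rw [card_insert_of_notMem hnew, hcard], ?_, ?_⟩
    · intro q hq
      obtain rfl | hq := mem_insert.mp hq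
      · exact ⟨le_rfl, hsb, hbL, hb⟩
      · obtain ⟨hbq, hq⟩ := hS q hq
        exact ⟨by omega, hq⟩
    · rw [coe_insert]
      refine hdisj.insert fun q hq _ => disjoint_left.mpr fun i hi hi' => ?_
      have := (hS q hq).1
      simp only [mem_Icc] at hi hi'
      omega

end Intervals

section PartnerMap

/-- `f` encodes a perfect matching of the subgraph of `G` induced by `U`: it sends every vertex of
`U` to the vertex it is matched with. The values of `f` outside `U` are irrelevant. -/
structure IsPartnerMap {V : Type*} (G : SimpleGraph V) (U : Finset V) (f : V → V) : Prop where
  mem : ∀ u ∈ U, f u ∈ U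
  apply_apply : ∀ u ∈ U, f (f u) = u
  adj : ∀ u ∈ U, G.Adj u (f u)

/-- The total weight of the edges `{u, f u}` with `u ∈ U`. If `f` is a partner map on `U`, then
every edge of the matching is counted twice, once for each of its ends. -/
def partnerSum {V : Type*} (c : Sym2 V → ℤ) (U : Finset V) (f : V → V) : ℤ :=
  ∑ u ∈ U, c s(u, f u)

/-- The subgraph of `G` induced by `U` has a perfect matching of weight `w`, where `w` counts every
edge twice, as in `partnerSum`. -/
def HasPartnerSum {V : Type*} (G : SimpleGraph V) (c : Sym2 V → ℤ) (U : Finset V) (w : ℤ) : Prop :=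
  ∃ f, IsPartnerMap G U f ∧ partnerSum c U f = w

variable {V : Type*} {G : SimpleGraph V} {c : Sym2 V → ℤ} {U W : Finset V} {f g m n : V → V}

namespace IsPartnerMap

lemma involutive [Fintype V] (hf : IsPartnerMap G univ f) : Function.Involutive f :=
  fun v => hf.apply_apply v (mem_univ v)

lemma apply_ne [Fintype V] (hf : IsPartnerMap G univ f) (v : V) : f v ≠ v :=
  (hf.adj v (mem_univ v)).ne'

lemma mono (hf : IsPartnerMap G U f) (hWU : W ⊆ U) (hW : ∀ u ∈ W, f u ∈ W) :
    IsPartnerMap G W f :=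
  ⟨hW, fun u hu => hf.apply_apply u (hWU hu), fun u hu => hf.adj u (hWU hu)⟩

lemma congr (hf : IsPartnerMap G U f) (hfg : ∀ u ∈ U, g u = f u) : IsPartnerMap G U g where
  mem u hu := hfg u hu ▸ hf.mem u hu
  apply_apply u hu := by rw [hfg u hu, hfg _ (hf.mem u hu), hf.apply_apply u hu]
  adj u hu := hfg u hu ▸ hf.adj u hu

variable [DecidableEq V]

lemma sdiff (hU : IsPartnerMap G U f) (hW : IsPartnerMap G W f) : IsPartnerMap G (U \ W) f := by
  refine hU.mono sdiff_subset fun u hu => ?_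
  obtain ⟨huU, huW⟩ := mem_sdiff.mp hu
  refine mem_sdiff.mpr ⟨hU.mem u huU, fun hfu => huW ?_⟩
  rw [← hU.apply_apply u huU]
  exact hW.mem _ hfu

lemma union (hU : IsPartnerMap G U f) (hW : IsPartnerMap G W f) : IsPartnerMap G (U ∪ W) f where
  mem u hu := (mem_union.mp hu).elim (fun hu => mem_union_left _ (hU.mem u hu))
    fun hu => mem_union_right _ (hW.mem u hu)
  apply_apply u hu := (mem_union.mp hu).elim (hU.apply_apply u) (hW.apply_apply u)
  adj u hu := (mem_union.mp hu).elim (hU.adj u) (hW.adj u)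

end IsPartnerMap

lemma partnerSum_congr (hfg : ∀ u ∈ U, g u = f u) : partnerSum c U g = partnerSum c U f :=
  sum_congr rfl fun u hu => by rw [hfg u hu]

/-- Re-matching the vertices of `U` changes the perfect matching `m` into another one and increases
its weight, in the sense of `partnerSum`, by `d`. -/
def IsSwitch (G : SimpleGraph V) (c : Sym2 V → ℤ) (m : V → V) (U : Finset V) (d : ℤ) : Prop :=
  IsPartnerMap G U m ∧ HasPartnerSum G c U (partnerSum c U m + d)

lemma IsPartnerMap.isSwitch (hm : IsPartnerMap G U m) (hn : IsPartnerMap G U n) :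
    IsSwitch G c m U (partnerSum c U n - partnerSum c U m) :=
  ⟨hm, n, hn, by ring⟩

/-- There are two switches of `m` on disjoint vertex sets, each with a gain in `(0, b]`. -/
def HasDisjointSwitches (G : SimpleGraph V) (c : Sym2 V → ℤ) (m : V → V) (b : ℤ) : Prop :=
  ∃ U₁ U₂ d₁ d₂, Disjoint U₁ U₂ ∧ IsSwitch G c m U₁ d₁ ∧ IsSwitch G c m U₂ d₂ ∧
    d₁ ∈ Set.Ioc 0 b ∧ d₂ ∈ Set.Ioc 0 b

lemma HasDisjointSwitches.mono {b b' : ℤ} (h : HasDisjointSwitches G c m b) (hbb' : b ≤ b') :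
    HasDisjointSwitches G c m b' := by
  obtain ⟨U₁, U₂, d₁, d₂, hU, h₁, h₂, hd₁, hd₂⟩ := h
  have hIoc : Set.Ioc 0 b ⊆ Set.Ioc 0 b' := Set.Ioc_subset_Ioc_right hbb'
  exact ⟨U₁, U₂, d₁, d₂, hU, h₁, h₂, hIoc hd₁, hIoc hd₂⟩

variable [DecidableEq V]

lemma partnerSum_union (hUW : Disjoint U W) :
    partnerSum c (U ∪ W) f = partnerSum c U f + partnerSum c W f :=
  sum_union hUW

lemma partnerSum_sdiff_add (hWU : W ⊆ U) :
    partnerSum c (U \ W) f + partnerSum c W f = partnerSum c U f :=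
  sum_sdiff hWU

lemma HasPartnerSum.union {w₁ w₂ : ℤ} (hU : HasPartnerSum G c U w₁) (hW : HasPartnerSum G c W w₂)
    (hUW : Disjoint U W) : HasPartnerSum G c (U ∪ W) (w₁ + w₂) := by
  obtain ⟨f, hf, rfl⟩ := hU
  obtain ⟨g, hg, rfl⟩ := hW
  have hUf : ∀ u ∈ U, U.piecewise f g u = f u := fun u hu => piecewise_eq_of_mem _ _ _ hu
  have hWg : ∀ u ∈ W, U.piecewise f g u = g u := fun u hu =>
    piecewise_eq_of_notMem _ _ _ (disjoint_right.mp hUW hu)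
  exact ⟨U.piecewise f g, (hf.congr hUf).union (hg.congr hWg),
    by rw [partnerSum_union hUW, partnerSum_congr hUf, partnerSum_congr hWg]⟩

lemma hasPartnerSum_pair {x y : V} (hxy : G.Adj x y) :
    HasPartnerSum G c {x, y} (2 * c s(x, y)) := by
  refine ⟨Equiv.swap x y, ⟨?_, ?_, ?_⟩, ?_⟩
  · simp
  · simp
  · simp [hxy, hxy.symm]
  · simp [partnerSum, sum_pair hxy.ne, Sym2.eq_swap (a := y), two_mul]

lemma IsSwitch.union {d₁ d₂ : ℤ} (hU : IsSwitch G c m U d₁) (hW : IsSwitch G c m W d₂)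
    (hUW : Disjoint U W) : IsSwitch G c m (U ∪ W) (d₁ + d₂) := by
  refine ⟨hU.1.union hW.1, ?_⟩
  convert hU.2.union hW.2 hUW using 1
  rw [partnerSum_union hUW]
  ring

omit [DecidableEq V] in
lemma IsSwitch.hasPartnerSum_add {d : ℤ} (hW : IsSwitch G c m W d) (hm : IsPartnerMap G U m)
    (hWU : W ⊆ U) : HasPartnerSum G c U (partnerSum c U m + d) := by
  classical
  have hrest : HasPartnerSum G c (U \ W) (partnerSum c (U \ W) m) := ⟨m, hm.sdiff hW.1, rfl⟩
  convert hrest.union hW.2 sdiff_disjoint using 1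
  · exact (sdiff_union_of_subset hWU).symm
  · rw [← partnerSum_sdiff_add hWU, add_assoc]

end PartnerMap

section MatchedPairs

variable {V ι : Type*} [DecidableEq V] {G : SimpleGraph V} {f : V → V} {x y : ι → V}
  {I J : Finset ι}

/-- The ends of the edges `{x i, y i}` with `i ∈ I`. -/
def pairSupport (x y : ι → V) (I : Finset ι) : Finset V := I.image x ∪ I.image y

lemma mem_pairSupport {u : V} : u ∈ pairSupport x y I ↔ ∃ i ∈ I, u = x i ∨ u = y i := by
  simp only [pairSupport, mem_union, mem_image, ← exists_or, ← and_or_left, eq_comm (a := u)]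

lemma IsPartnerMap.pairSupport [Fintype V] (hf : IsPartnerMap G univ f)
    (hxy : ∀ i ∈ I, f (x i) = y i) : IsPartnerMap G (pairSupport x y I) f := by
  refine hf.mono (subset_univ _) fun u hu => ?_
  obtain ⟨i, hi, rfl | rfl⟩ := mem_pairSupport.mp hu
  · exact mem_pairSupport.mpr ⟨i, hi, .inr (hxy i hi)⟩
  · exact mem_pairSupport.mpr ⟨i, hi, .inl (by rw [← hxy i hi, hf.involutive])⟩

lemma partnerSum_pairSupport (c : Sym2 V → ℤ) (hf : Function.Involutive f)
    (hxy : ∀ i ∈ I, f (x i) = y i) (hx : Set.InjOn x I) (hne : ∀ i ∈ I, ∀ j ∈ I, x i ≠ y j) :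
    partnerSum c (pairSupport x y I) f = 2 * ∑ i ∈ I, c s(x i, y i) := by
  have hy : Set.InjOn y I := fun i hi j hj hij =>
    hx hi hj (hf.injective (by rw [hxy i hi, hxy j hj, hij]))
  have hdisj : Disjoint (I.image x) (I.image y) := by
    rw [disjoint_left]
    intro u hu hu'
    obtain ⟨i, hi, rfl⟩ := mem_image.mp hu
    obtain ⟨j, hj, hij⟩ := mem_image.mp hu'
    exact hne i hi j hj hij.symm
  rw [pairSupport, partnerSum_union hdisj, partnerSum, partnerSum, sum_image hx, sum_image hy,
    two_mul]
  congr 1 <;> refine sum_congr rfl fun i hi => ?_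
  · rw [hxy i hi]
  · rw [← hxy i hi, hf, Sym2.eq_swap]

end MatchedPairs

section AlternatingCycle

variable {V : Type*} {m n : V → V} {x : V}

/-- The vertex `v i` of the alternating cycle `v 0, m (v 0), v 1, m (v 1), …` through `x = v 0`,
whose edges are alternately of the form `{v i, m (v i)}` and `{m (v i), v (i + 1)}`, where
`n (m (v i)) = v (i + 1)`. -/
def altVertex (m n : V → V) (x : V) (i : ℕ) : V := (n ∘ m)^[i] x

/-- Half the number of vertices of the alternating cycle through `x`, so that the edges of both
kinds are indexed by `range (altLength m n x)`. -/
noncomputable def altLength (m n : V → V) (x : V) : ℕ := Function.minimalPeriod (n ∘ m) x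

lemma apply_apply_altVertex (i : ℕ) : n (m (altVertex m n x i)) = altVertex m n x (i + 1) :=
  (Function.iterate_succ_apply' (n ∘ m) i x).symm

lemma apply_altVertex_succ (hn : Function.Involutive n) (i : ℕ) :
    n (altVertex m n x (i + 1)) = m (altVertex m n x i) := by
  rw [← apply_apply_altVertex, hn]

lemma altVertex_altLength : altVertex m n x (altLength m n x) = altVertex m n x 0 :=
  Function.isPeriodicPt_minimalPeriod (n ∘ m) x

lemma injOn_altVertex : Set.InjOn (altVertex m n x) (range (altLength m n x)) := by
  rw [coe_range]
  exact Function.iterate_injOn_Iio_minimalPeriod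

lemma injOn_apply_altVertex (hm : Function.Injective m) :
    Set.InjOn (fun i => m (altVertex m n x i)) (range (altLength m n x)) :=
  hm.comp_injOn injOn_altVertex

lemma altLength_pos [Finite V] (hm : Function.Injective m) (hn : Function.Injective n) :
    0 < altLength m n x :=
  Function.minimalPeriod_pos_of_mem_periodicPts ((hn.comp hm).mem_periodicPts x)

lemma apply_altVertex_ne_of_le (hm : Function.Involutive m) (hn : Function.Involutive n)
    (hm_ne : ∀ v, m v ≠ v) (hn_ne : ∀ v, n v ≠ v) {i j : ℕ} (hij : i ≤ j) :
    m (altVertex m n x i) ≠ altVertex m n x j := by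
  intro h
  obtain ⟨k, rfl⟩ := Nat.exists_eq_add_of_le hij
  induction k using Nat.twoStepInduction generalizing i with
  | zero => exact hm_ne _ h
  | one => exact hn_ne _ ((apply_altVertex_succ hn i).trans h)
  | more k ih _ =>
    have hnext := calc
      m (altVertex m n x (i + 1 + k)) = n (altVertex m n x (i + (k + 2))) := by
        rw [← apply_altVertex_succ (m := m) hn, show i + 1 + k + 1 = i + (k + 2) by omega]
      _ = n (m (altVertex m n x i)) := by rw [h]
      _ = altVertex m n x (i + 1) := apply_apply_altVertex i
    exact ih (by omega) (by rw [← hnext, hm])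

lemma apply_altVertex_ne (hm : Function.Involutive m) (hn : Function.Involutive n)
    (hm_ne : ∀ v, m v ≠ v) (hn_ne : ∀ v, n v ≠ v) (i j : ℕ) :
    m (altVertex m n x i) ≠ altVertex m n x j := by
  rcases le_total i j with hij | hji
  · exact apply_altVertex_ne_of_le hm hn hm_ne hn_ne hij
  · intro h
    exact apply_altVertex_ne_of_le hm hn hm_ne hn_ne hji (by rw [← h, hm])

/-- The ends of those edges of `m` on the alternating cycle through `x` whose index is in `I`. -/
def altBlock [DecidableEq V] (m n : V → V) (x : V) (I : Finset ℕ) : Finset V :=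
  pairSupport (altVertex m n x) (fun i => m (altVertex m n x i)) I

/-- The ends of those edges of `n` on the alternating cycle through `x` whose index is in `I`. -/
def altLinks [DecidableEq V] (m n : V → V) (x : V) (I : Finset ℕ) : Finset V :=
  pairSupport (fun i => m (altVertex m n x i)) (fun i => altVertex m n x (i + 1)) I

/-- The weight of the `i`-th edge of `m` on the alternating cycle through `x`. -/
def blockWeight (c : Sym2 V → ℤ) (m n : V → V) (x : V) (i : ℕ) : ℤ :=
  c s(altVertex m n x i, m (altVertex m n x i))

/-- The weight of the `i`-th edge of `n` on the alternating cycle through `x`. -/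
def linkWeight (c : Sym2 V → ℤ) (m n : V → V) (x : V) (i : ℕ) : ℤ :=
  c s(m (altVertex m n x i), altVertex m n x (i + 1))

variable [DecidableEq V] {I J : Finset ℕ} {a b : ℕ}

lemma altBlock_union : altBlock m n x (I ∪ J) = altBlock m n x I ∪ altBlock m n x J := by
  simp only [altBlock, pairSupport, image_union]
  ac_rfl

lemma altLinks_union : altLinks m n x (I ∪ J) = altLinks m n x I ∪ altLinks m n x J := by
  simp only [altLinks, pairSupport, image_union]
  ac_rfl

lemma altBlock_Icc (hab : a ≤ b) :
    altBlock m n x (Icc a b) =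
      altLinks m n x (Ico a b) ∪ {altVertex m n x a, m (altVertex m n x b)} := by
  have hleft : (Icc a b).image (altVertex m n x) =
      insert (altVertex m n x a) ((Ico a b).image fun i => altVertex m n x (i + 1)) := by
    rw [← insert_Icc_add_one_left_eq_Icc hab, image_insert, ← Ico_add_one_right_eq_Icc,
      ← image_add_right_Ico, image_image]
    rfl
  have hright : (Icc a b).image (fun i => m (altVertex m n x i)) =
      insert (m (altVertex m n x b)) ((Ico a b).image fun i => m (altVertex m n x i)) := by
    rw [← Ico_insert_right hab, image_insert]
  rw [altBlock, altLinks, pairSupport, pairSupport, hleft, hright]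
  ext u
  simp only [mem_union, mem_insert, mem_singleton]
  tauto

lemma altBlock_range_altLength (hL : 0 < altLength m n x) :
    altBlock m n x (range (altLength m n x)) = altLinks m n x (range (altLength m n x)) := by
  obtain ⟨k, hk⟩ := Nat.exists_eq_add_one.mpr hL
  have hlast : altLinks m n x {k} = {altVertex m n x 0, m (altVertex m n x k)} := by
    rw [← altVertex_altLength, hk]
    exact pair_comm _ _
  rw [hk, range_eq_Ico, Ico_add_one_right_eq_Icc, altBlock_Icc (Nat.zero_le k),
    ← Ico_insert_right (Nat.zero_le k), insert_eq k, union_comm {k}, altLinks_union, hlast]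

variable [Fintype V] {G : SimpleGraph V}

lemma isPartnerMap_altBlock (hm : IsPartnerMap G univ m) : IsPartnerMap G (altBlock m n x I) m :=
  hm.pairSupport fun _ _ => rfl

lemma isPartnerMap_altLinks (hn : IsPartnerMap G univ n) : IsPartnerMap G (altLinks m n x I) n :=
  hn.pairSupport fun i _ => apply_apply_altVertex i

lemma disjoint_altBlock (hm : IsPartnerMap G univ m) (hn : IsPartnerMap G univ n)
    (hI : I ⊆ range (altLength m n x)) (hJ : J ⊆ range (altLength m n x)) (hIJ : Disjoint I J) :
    Disjoint (altBlock m n x I) (altBlock m n x J) := by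
  have hne := apply_altVertex_ne (x := x) hm.involutive hn.involutive hm.apply_ne hn.apply_ne
  have heq : ∀ i ∈ I, ∀ j ∈ J, altVertex m n x i ≠ altVertex m n x j := fun i hi j hj hij =>
    disjoint_left.mp hIJ hi (injOn_altVertex (hI hi) (hJ hj) hij ▸ hj)
  rw [disjoint_left]
  intro u hu hu'
  obtain ⟨i, hi, rfl | rfl⟩ := mem_pairSupport.mp hu <;>
    obtain ⟨j, hj, hij | hij⟩ := mem_pairSupport.mp hu'
  · exact heq i hi j hj hij
  · exact hne j i hij.symm
  · exact hne i j hij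
  · exact heq i hi j hj (hm.involutive.injective hij)

lemma partnerSum_altBlock (c : Sym2 V → ℤ) (hm : IsPartnerMap G univ m)
    (hn : IsPartnerMap G univ n) (hI : I ⊆ range (altLength m n x)) :
    partnerSum c (altBlock m n x I) m = 2 * ∑ i ∈ I, blockWeight c m n x i :=
  partnerSum_pairSupport c hm.involutive (fun _ _ => rfl) (injOn_altVertex.mono hI)
    fun i _ j _ => (apply_altVertex_ne hm.involutive hn.involutive hm.apply_ne hn.apply_ne j i).symm

lemma partnerSum_altLinks (c : Sym2 V → ℤ) (hm : IsPartnerMap G univ m)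
    (hn : IsPartnerMap G univ n) (hI : I ⊆ range (altLength m n x)) :
    partnerSum c (altLinks m n x I) n = 2 * ∑ i ∈ I, linkWeight c m n x i :=
  partnerSum_pairSupport c hn.involutive (fun i _ => apply_apply_altVertex i)
    ((injOn_apply_altVertex hm.involutive.injective).mono hI) fun i _ j _ =>
      apply_altVertex_ne hm.involutive hn.involutive hm.apply_ne hn.apply_ne i (j + 1)

end AlternatingCycle

section Exchange

variable {V : Type*} [Fintype V] [DecidableEq V] {G : SimpleGraph V} {c : Sym2 V → ℤ}
  {m n : V → V} {x : V} {I : Finset ℕ} {a b a' b' : ℕ}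

lemma altVertex_notMem_altLinks (hm : IsPartnerMap G univ m) (hn : IsPartnerMap G univ n)
    (ha : a < altLength m n x) (hI : ∀ i ∈ I, i + 1 < altLength m n x ∧ i + 1 ≠ a) :
    altVertex m n x a ∉ altLinks m n x I := by
  intro hmem
  obtain ⟨i, hi, hai | hai⟩ := mem_pairSupport.mp hmem
  · exact apply_altVertex_ne hm.involutive hn.involutive hm.apply_ne hn.apply_ne i a hai.symm
  · exact (hI i hi).2 (injOn_altVertex (mem_coe.mpr (mem_range.mpr (hI i hi).1))
      (mem_coe.mpr (mem_range.mpr ha)) hai.symm)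

lemma apply_altVertex_notMem_altLinks (hm : IsPartnerMap G univ m) (hn : IsPartnerMap G univ n)
    (hb : b < altLength m n x) (hI : ∀ i ∈ I, i < altLength m n x ∧ i ≠ b) :
    m (altVertex m n x b) ∉ altLinks m n x I := by
  intro hmem
  obtain ⟨i, hi, hbi | hbi⟩ := mem_pairSupport.mp hmem
  · exact (hI i hi).2 (injOn_apply_altVertex hm.involutive.injective
      (mem_coe.mpr (mem_range.mpr (hI i hi).1)) (mem_coe.mpr (mem_range.mpr hb)) hbi.symm)
  · exact apply_altVertex_ne hm.involutive hn.involutive hm.apply_ne hn.apply_ne b (i + 1) hbi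

lemma hasPartnerSum_altBlock_Icc_union_Icc (hm : IsPartnerMap G univ m)
    (hn : IsPartnerMap G univ n) (hab : a ≤ b) (hb : b < altLength m n x) (hab' : a' ≤ b')
    (hb' : b' < altLength m n x) (hdisj : Disjoint (Icc a b) (Icc a' b'))
    (hfirst : G.Adj (altVertex m n x a) (altVertex m n x a'))
    (hlast : G.Adj (m (altVertex m n x b)) (m (altVertex m n x b'))) :
    HasPartnerSum G c (altBlock m n x (Icc a b ∪ Icc a' b'))
      (2 * (∑ i ∈ Ico a b, linkWeight c m n x i + ∑ i ∈ Ico a' b', linkWeight c m n x i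
        + c s(altVertex m n x a, altVertex m n x a')
        + c s(m (altVertex m n x b), m (altVertex m n x b')))) := by
  have hsep : b < a' ∨ b' < a := by
    by_contra! h
    exact disjoint_left.mp hdisj (mem_Icc.mpr ⟨le_max_left a a', max_le hab h.1⟩)
      (mem_Icc.mpr ⟨le_max_right a a', max_le h.2 hab'⟩)
  have hIco : ∀ i ∈ Ico a b ∪ Ico a' b', i + 1 < altLength m n x ∧
      i + 1 ≠ a ∧ i + 1 ≠ a' ∧ i ≠ b ∧ i ≠ b' := by
    intro i hi
    simp only [mem_union, mem_Ico] at hi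
    omega
  have hlinks : HasPartnerSum G c (altLinks m n x (Ico a b ∪ Ico a' b'))
      (2 * ∑ i ∈ Ico a b ∪ Ico a' b', linkWeight c m n x i) :=
    ⟨n, isPartnerMap_altLinks hn, partnerSum_altLinks c hm hn fun i hi =>
      mem_range.mpr (Nat.lt_of_succ_lt (hIco i hi).1)⟩
  have hdisj_first : Disjoint (altLinks m n x (Ico a b ∪ Ico a' b'))
      {altVertex m n x a, altVertex m n x a'} := by
    rw [disjoint_insert_right, disjoint_singleton_right]
    constructor <;> refine altVertex_notMem_altLinks hm hn (by omega) fun i hi => ?_ <;>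
      grind
  have hdisj_last : Disjoint (altLinks m n x (Ico a b ∪ Ico a' b') ∪
      {altVertex m n x a, altVertex m n x a'})
      {m (altVertex m n x b), m (altVertex m n x b')} := by
    have hne := apply_altVertex_ne (x := x) hm.involutive hn.involutive hm.apply_ne hn.apply_ne
    simp only [disjoint_insert_right, disjoint_singleton_right, mem_union, mem_insert,
      mem_singleton, hne, or_false]
    constructor <;> refine apply_altVertex_notMem_altLinks hm hn (by omega) fun i hi => ?_ <;>
      grind
  convert (hlinks.union (hasPartnerSum_pair hfirst) hdisj_first).union
    (hasPartnerSum_pair hlast) hdisj_last using 1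
  · rw [altBlock_union, altBlock_Icc hab, altBlock_Icc hab', altLinks_union]
    ext u
    simp only [mem_union, mem_insert, mem_singleton]
    tauto
  · rw [sum_union (hdisj.mono Ico_subset_Icc_self Ico_subset_Icc_self)]
    ring

lemma isSwitch_altBlock_Icc_union_Icc (hm : IsPartnerMap G univ m)
    (hn : IsPartnerMap G univ n) (hab : a ≤ b) (hb : b < altLength m n x) (hab' : a' ≤ b')
    (hb' : b' < altLength m n x) (hdisj : Disjoint (Icc a b) (Icc a' b'))
    (hfirst : G.Adj (altVertex m n x a) (altVertex m n x a'))
    (hlast : G.Adj (m (altVertex m n x b)) (m (altVertex m n x b'))) :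
    IsSwitch G c m (altBlock m n x (Icc a b ∪ Icc a' b'))
      (2 * (pathWeight (blockWeight c m n x) (linkWeight c m n x) a b
        + pathWeight (blockWeight c m n x) (linkWeight c m n x) a' b'
        + c s(altVertex m n x a, altVertex m n x a')
        + c s(m (altVertex m n x b), m (altVertex m n x b')))) := by
  have hI : Icc a b ∪ Icc a' b' ⊆ range (altLength m n x) := fun i hi => by
    simp only [mem_union, mem_Icc] at hi
    exact mem_range.mpr (by omega)
  refine ⟨isPartnerMap_altBlock hm, ?_⟩
  convert hasPartnerSum_altBlock_Icc_union_Icc hm hn hab hb hab' hb' hdisj hfirst hlast using 1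
  rw [partnerSum_altBlock c hm hn hI, sum_union hdisj, pathWeight, pathWeight]
  ring

end Exchange

section AltCycle

variable {V : Type*} [Fintype V] [DecidableEq V] {G : SimpleGraph V} {c : Sym2 V → ℤ}
  {m n : V → V} {x : V} {U : Finset V}

/-- The vertex set of the alternating cycle through `x`. -/
noncomputable def altCycle (m n : V → V) (x : V) : Finset V :=
  altBlock m n x (range (altLength m n x))

lemma altCycle_eq_altLinks (hm : IsPartnerMap G univ m) (hn : IsPartnerMap G univ n) :
    altCycle m n x = altLinks m n x (range (altLength m n x)) :=
  altBlock_range_altLength (altLength_pos hm.involutive.injective hn.involutive.injective)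

lemma isPartnerMap_altCycle_left (hm : IsPartnerMap G univ m) :
    IsPartnerMap G (altCycle m n x) m :=
  isPartnerMap_altBlock hm

lemma isPartnerMap_altCycle_right (hm : IsPartnerMap G univ m) (hn : IsPartnerMap G univ n) :
    IsPartnerMap G (altCycle m n x) n :=
  altCycle_eq_altLinks hm hn ▸ isPartnerMap_altLinks hn

lemma partnerSum_altCycle_sub (c : Sym2 V → ℤ) (hm : IsPartnerMap G univ m)
    (hn : IsPartnerMap G univ n) :
    partnerSum c (altCycle m n x) n - partnerSum c (altCycle m n x) m =
      2 * ∑ i ∈ range (altLength m n x), (linkWeight c m n x i - blockWeight c m n x i) := by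
  rw [altCycle_eq_altLinks hm hn, partnerSum_altLinks c hm hn subset_rfl,
    ← altCycle_eq_altLinks hm hn, altCycle, partnerSum_altBlock c hm hn subset_rfl,
    sum_sub_distrib]
  ring

lemma mem_altCycle (hm : IsPartnerMap G univ m) (hn : IsPartnerMap G univ n) :
    x ∈ altCycle m n x :=
  mem_pairSupport.mpr ⟨0, mem_range.mpr
    (altLength_pos hm.involutive.injective hn.involutive.injective), .inl rfl⟩

omit [Fintype V] in
lemma altCycle_subset (hm : IsPartnerMap G U m) (hn : IsPartnerMap G U n) (hx : x ∈ U) :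
    altCycle m n x ⊆ U := by
  have hv : ∀ i, altVertex m n x i ∈ U := fun i => by
    induction i with
    | zero => exact hx
    | succ i ih => exact apply_apply_altVertex (n := n) i ▸ hn.mem _ (hm.mem _ ih)
  intro u hu
  obtain ⟨i, -, rfl | rfl⟩ := mem_pairSupport.mp hu
  · exact hv i
  · exact hm.mem _ (hv i)

lemma exists_altCycle_subset_partnerSum_lt (hm : IsPartnerMap G univ m)
    (hn : IsPartnerMap G univ n) (hUm : IsPartnerMap G U m) (hUn : IsPartnerMap G U n)
    (hlt : partnerSum c U m < partnerSum c U n) :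
    ∃ x, altCycle m n x ⊆ U ∧
      partnerSum c (altCycle m n x) m < partnerSum c (altCycle m n x) n := by
  induction U using Finset.strongInduction with
  | H U ih =>
    obtain ⟨x, hx⟩ : U.Nonempty := nonempty_iff_ne_empty.mpr fun hU => by
      simp [hU, partnerSum] at hlt
    have hsub := altCycle_subset hUm hUn hx
    rcases lt_or_ge (partnerSum c (altCycle m n x) m) (partnerSum c (altCycle m n x) n)
      with hpos | hneg
    · exact ⟨x, hsub, hpos⟩
    · have hrest : partnerSum c (U \ altCycle m n x) m < partnerSum c (U \ altCycle m n x) n := by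
        rw [← partnerSum_sdiff_add hsub, ← partnerSum_sdiff_add (f := n) hsub] at hlt
        linarith
      obtain ⟨y, hy, hpos⟩ := ih _ (sdiff_ssubset hsub ⟨x, mem_altCycle hm hn⟩)
        (hUm.sdiff (isPartnerMap_altCycle_left hm))
        (hUn.sdiff (isPartnerMap_altCycle_right hm hn)) hrest
      exact ⟨y, hy.trans sdiff_subset, hpos⟩

end AltCycle

section DisjointSwitches

variable {V : Type*} [Fintype V] [DecidableEq V] {G : SimpleGraph V} {c : Sym2 V → ℤ}
  {m n : V → V} {x : V}

lemma exists_isSwitch_of_pairwiseDisjoint_Icc (hc : ∀ e, c e ∈ Set.Icc 0 1)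
    (hm : IsPartnerMap G univ m) (hn : IsPartnerMap G univ n) {S : Finset (ℕ × ℕ)}
    (hS : ∀ q ∈ S, q.1 ≤ q.2 ∧ q.2 < altLength m n x ∧
      pathWeight (blockWeight c m n x) (linkWeight c m n x) q.1 q.2 = 1)
    (hdisj : (S : Set (ℕ × ℕ)).PairwiseDisjoint fun q => Icc q.1 q.2)
    (hcard : 4 ^ G.indepNum ≤ #S) :
    ∃ T ⊆ S, #T ≤ 2 ∧ ∃ d ∈ Set.Ioc 0 8,
      IsSwitch G c m (altBlock m n x (T.biUnion fun q => Icc q.1 q.2)) d := by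
  have hinj : ∀ p : ℕ × ℕ → ℕ, (∀ q ∈ S, p q ∈ Icc q.1 q.2) →
      Set.InjOn (fun q => altVertex m n x (p q)) S := by
    intro p hp q hq q' hq' hqq'
    have hrange : ∀ q ∈ S, p q ∈ range (altLength m n x) := fun q hq =>
      mem_range.mpr ((mem_Icc.mp (hp q hq)).2.trans_lt (hS q hq).2.1)
    have hpq : p q = p q' := injOn_altVertex (hrange q hq) (hrange q' hq') hqq'
    exact hdisj.elim_finset hq hq' (p q) (hp q hq) (hpq ▸ hp q' hq')
  have hfirst := hinj Prod.fst fun q hq => left_mem_Icc.mpr (hS q hq).1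
  have hlast := hm.involutive.injective.comp_injOn
    (hinj Prod.snd fun q hq => right_mem_Icc.mpr (hS q hq).1)
  obtain ⟨q, hq, q', hq', hadj_first, hadj_last⟩ :=
    exists_adj_and_adj_of_four_pow_indepNum_le_card G hfirst hlast hcard
  have hne : q ≠ q' := fun h => hadj_first.ne (by rw [h])
  obtain ⟨hab, hb, hw⟩ := hS q hq
  obtain ⟨hab', hb', hw'⟩ := hS q' hq'
  have hswitch := isSwitch_altBlock_Icc_union_Icc (c := c) hm hn hab hb hab' hb'
    (hdisj hq hq' hne) hadj_first hadj_last
  refine ⟨{q, q'}, by simp [insert_subset_iff, hq, hq'], card_le_two, _, ?_, by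
    rwa [biUnion_insert, singleton_biUnion]⟩
  have hfirst01 := hc s(altVertex m n x q.1, altVertex m n x q'.1)
  have hlast01 := hc s(m (altVertex m n x q.2), m (altVertex m n x q'.2))
  rw [Set.mem_Icc] at hfirst01 hlast01
  rw [Set.mem_Ioc, hw, hw']
  omega

lemma hasDisjointSwitches_of_lt_altCycle (hc : ∀ e, c e ∈ Set.Icc 0 1)
    (hm : IsPartnerMap G univ m) (hn : IsPartnerMap G univ n)
    (hgain : 8 * 4 ^ G.indepNum <
      partnerSum c (altCycle m n x) n - partnerSum c (altCycle m n x) m) :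
    HasDisjointSwitches G c m 8 := by
  have hα : 4 ≤ 4 ^ G.indepNum := by
    have : Nonempty V := ⟨x⟩
    exact Nat.le_self_pow (indepNum_pos G).ne' 4
  rw [partnerSum_altCycle_sub c hm hn, range_eq_Ico] at hgain
  obtain ⟨S, hcard, hS, hdisj⟩ := exists_disjoint_intervals_pathWeight_eq_one
    (fun i => (hc _).1) (fun i => (hc _).2) (altLength m n x) (4 ^ G.indepNum + 2) 0
    (μ := blockWeight c m n x) (ν := linkWeight c m n x) (by push_cast; zify at hα; linarith)
  replace hS : ∀ q ∈ S, _ := fun q hq => (hS q hq).2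
  obtain ⟨T₁, hT₁, hcard₁, d₁, hd₁, hswitch₁⟩ :=
    exists_isSwitch_of_pairwiseDisjoint_Icc hc hm hn hS hdisj (by omega)
  obtain ⟨T₂, hT₂, -, d₂, hd₂, hswitch₂⟩ :=
    exists_isSwitch_of_pairwiseDisjoint_Icc (S := S \ T₁) hc hm hn
      (fun q hq => hS q (sdiff_subset hq)) (hdisj.subset (coe_subset.mpr sdiff_subset))
      (by have := le_card_sdiff T₁ S; omega)
  have hrange : ∀ T ⊆ S, (T.biUnion fun q => Icc q.1 q.2) ⊆ range (altLength m n x) :=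
    fun T hT => biUnion_subset.mpr fun q hq i hi =>
      mem_range.mpr ((mem_Icc.mp hi).2.trans_lt (hS q (hT hq)).2.1)
  refine ⟨_, _, d₁, d₂, disjoint_altBlock hm hn (hrange T₁ hT₁)
    (hrange T₂ (hT₂.trans sdiff_subset)) ?_, hswitch₁, hswitch₂, hd₁, hd₂⟩
  refine (disjoint_biUnion_left _ _ _).mpr fun q hq => (disjoint_biUnion_right _ _ _).mpr
    fun q' hq' => hdisj (hT₁ hq) (sdiff_subset (hT₂ hq')) ?_
  rintro rfl
  exact (mem_sdiff.mp (hT₂ hq')).2 hq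

omit [DecidableEq V] in
lemma hasDisjointSwitches_of_lt {b : ℤ} (hc : ∀ e, c e ∈ Set.Icc 0 1)
    (hm : IsPartnerMap G univ m) (hn : IsPartnerMap G univ n) (hb : 8 * 4 ^ G.indepNum ≤ b)
    (hlt : b < partnerSum c univ n - partnerSum c univ m) : HasDisjointSwitches G c m b := by
  classical
  have hb8 : 8 ≤ b := by have := one_le_pow₀ (n := G.indepNum) (a := (4 : ℤ)) (by simp); linarith
  by_cases hbig : ∃ x, b < partnerSum c (altCycle m n x) n - partnerSum c (altCycle m n x) m
  · obtain ⟨x, hx⟩ := hbig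
    exact (hasDisjointSwitches_of_lt_altCycle hc hm hn (hb.trans_lt hx)).mono hb8
  push Not at hbig
  obtain ⟨x, -, hx⟩ := exists_altCycle_subset_partnerSum_lt hm hn hm hn (c := c) (by linarith)
  have hxm := isPartnerMap_altCycle_left (n := n) (x := x) hm
  have hxn := isPartnerMap_altCycle_right (x := x) hm hn
  have hrest : partnerSum c (univ \ altCycle m n x) m < partnerSum c (univ \ altCycle m n x) n := by
    have hm_add := partnerSum_sdiff_add (c := c) (f := m) (subset_univ (altCycle m n x))
    have hn_add := partnerSum_sdiff_add (c := c) (f := n) (subset_univ (altCycle m n x))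
    linarith [hbig x]
  obtain ⟨y, hyx, hy⟩ := exists_altCycle_subset_partnerSum_lt hm hn (hm.sdiff hxm)
    (hn.sdiff hxn) hrest
  exact ⟨altCycle m n x, altCycle m n y, _, _, disjoint_sdiff.mono_right hyx, hxm.isSwitch hxn,
    (isPartnerMap_altCycle_left hm).isSwitch (isPartnerMap_altCycle_right hm hn),
    ⟨sub_pos.mpr hx, hbig x⟩, ⟨sub_pos.mpr hy, hbig y⟩⟩

end DisjointSwitches

section PerfectMatching

variable {V : Type*} [DecidableEq V] {G : SimpleGraph V} {c : Sym2 V → ℤ}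
  {M : Finset (Sym2 V)} {m : V → V}

namespace IsPM

lemma eq_of_mem (hM : IsPM G M) {v : V} {e e' : Sym2 V} (he : e ∈ M) (hv : v ∈ e) (he' : e' ∈ M)
    (hv' : v ∈ e') : e = e' :=
  (hM.2 v).unique ⟨he, hv⟩ ⟨he', hv'⟩

variable [Fintype V]

lemma exists_isPartnerMap (hM : IsPM G M) :
    ∃ m, IsPartnerMap G univ m ∧ ∀ v, s(v, m v) ∈ M := by
  have hpartner : ∀ v, ∃ w, s(v, w) ∈ M := fun v => by
    obtain ⟨e, ⟨he, hv⟩, -⟩ := hM.2 v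
    obtain ⟨w, rfl⟩ := Sym2.mem_iff_exists.mp hv
    exact ⟨w, he⟩
  choose m hm using hpartner
  refine ⟨m, ⟨fun v _ => mem_univ _, fun v _ => ?_, fun v _ => hM.1 (hm v)⟩, hm⟩
  have hedge : s(m v, m (m v)) = s(m v, v) := by
    rw [Sym2.eq_swap (b := v)]
    exact hM.eq_of_mem (hm (m v)) (Sym2.mem_mk_left _ _) (hm v) (Sym2.mem_mk_right _ _)
  exact Sym2.congr_right.mp hedge

lemma partnerSum_eq (hM : IsPM G M) (c : Sym2 V → ℤ) (hm : ∀ v, s(v, m v) ∈ M) :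
    partnerSum c univ m = 2 * ∑ e ∈ M, c e := by
  have hends : ∀ e ∈ M, #{v | s(v, m v) = e} = 2 := fun e he => by
    have hfiber : univ.filter (fun v => s(v, m v) = e) = e.toFinset := by
      ext v
      rw [mem_filter_univ, Sym2.mem_toFinset]
      refine ⟨?_, fun hv => hM.eq_of_mem (hm v) (Sym2.mem_mk_left _ _) he hv⟩
      rintro rfl
      exact Sym2.mem_mk_left _ _
    rw [hfiber, Sym2.card_toFinset_of_not_isDiag e (G.not_isDiag_of_mem_edgeSet (hM.1 he))]
  calc ∑ v, c s(v, m v)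
      = ∑ e ∈ M, ∑ v with s(v, m v) = e, c s(v, m v) :=
        (sum_fiberwise_of_maps_to (fun v _ => hm v) _).symm
    _ = ∑ e ∈ M, 2 * c e := sum_congr rfl fun e he => by
        rw [sum_congr rfl fun v hv => congrArg c (mem_filter.mp hv).2, sum_const, hends e he,
          two_nsmul, two_mul]
    _ = 2 * ∑ e ∈ M, c e := (mul_sum _ _ _).symm

lemma two_mul_card (hM : IsPM G M) : 2 * #M = Fintype.card V := by
  obtain ⟨m, -, hm⟩ := hM.exists_isPartnerMap
  have hsum := hM.partnerSum_eq (fun _ => 1) hm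
  simp only [partnerSum, sum_const, nsmul_one, card_univ] at hsum
  exact_mod_cast hsum.symm

end IsPM

variable [Fintype V]

lemma IsPartnerMap.exists_isPM (hm : IsPartnerMap G univ m) :
    ∃ M, IsPM G M ∧ ∀ v, s(v, m v) ∈ M := by
  have hmem : ∀ v, s(v, m v) ∈ univ.image fun v => s(v, m v) := fun v =>
    mem_image_of_mem _ (mem_univ v)
  refine ⟨univ.image fun v => s(v, m v), ⟨?_, fun v => ?_⟩, hmem⟩
  · rw [coe_image, Set.image_subset_iff]
    exact fun v hv => hm.adj v hv
  · refine ⟨s(v, m v), ⟨hmem v, Sym2.mem_mk_left _ _⟩, ?_⟩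
    rintro e ⟨he, hv⟩
    obtain ⟨w, -, rfl⟩ := mem_image.mp he
    obtain rfl | rfl := Sym2.mem_iff.mp hv
    · rfl
    · rw [hm.involutive, Sym2.eq_swap]

lemma HasPartnerSum.exists_isPM {w : ℤ} (h : HasPartnerSum G c univ w) :
    ∃ M, IsPM G M ∧ w = 2 * ∑ e ∈ M, c e := by
  obtain ⟨m, hm, rfl⟩ := h
  obtain ⟨M, hM, hmM⟩ := hm.exists_isPM
  exact ⟨M, hM, hM.partnerSum_eq c hmM⟩

end PerfectMatching

section CloseParity

variable {V : Type*} [Finite V] [DecidableEq V] {G : SimpleGraph V} {c : Sym2 V → ℤ}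
  {M N : Finset (Sym2 V)}

lemma exists_isPM_sum_modEq_of_lt_sum (hc : ∀ e, c e ∈ Set.Icc 0 1) (hM : IsPM G M)
    (hN : IsPM G N) (hgap : 8 * 4 ^ G.indepNum < ∑ e ∈ N, c e - ∑ e ∈ M, c e) :
    ∃ F, IsPM G F ∧ ∑ e ∈ M, c e < ∑ e ∈ F, c e ∧ ∑ e ∈ F, c e ≤ ∑ e ∈ N, c e ∧
      ∑ e ∈ F, c e ≡ ∑ e ∈ M, c e [ZMOD 2] := by
  have := Fintype.ofFinite V
  obtain ⟨m, hm, hmM⟩ := hM.exists_isPartnerMap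
  obtain ⟨n, hn, hnN⟩ := hN.exists_isPartnerMap
  have hmsum := hM.partnerSum_eq c hmM
  have hpos : (0 : ℤ) < 8 * 4 ^ G.indepNum := by positivity
  obtain ⟨U₁, U₂, d₁, d₂, hdisj, h₁, h₂, hd₁, hd₂⟩ := hasDisjointSwitches_of_lt hc hm hn hgap.le
    (by rw [hN.partnerSum_eq c hnN, hmsum]; linarith)
  rw [Set.mem_Ioc] at hd₁ hd₂
  obtain ⟨F₁, hF₁, hsum₁⟩ := (h₁.hasPartnerSum_add hm (subset_univ _)).exists_isPM
  obtain ⟨F₂, hF₂, hsum₂⟩ := (h₂.hasPartnerSum_add hm (subset_univ _)).exists_isPM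
  obtain ⟨F₃, hF₃, hsum₃⟩ :=
    ((h₁.union h₂ hdisj).hasPartnerSum_add hm (subset_univ _)).exists_isPM
  by_cases hpar₁ : ∑ e ∈ F₁, c e ≡ ∑ e ∈ M, c e [ZMOD 2]
  · exact ⟨F₁, hF₁, by omega, by omega, hpar₁⟩
  by_cases hpar₂ : ∑ e ∈ F₂, c e ≡ ∑ e ∈ M, c e [ZMOD 2]
  · exact ⟨F₂, hF₂, by omega, by omega, hpar₂⟩
  rw [Int.ModEq] at hpar₁ hpar₂
  exact ⟨F₃, hF₃, by omega, by omega, by rw [Int.ModEq]; omega⟩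

lemma exists_isPM_sum_modEq_close_below (hc : ∀ e, c e ∈ Set.Icc 0 1) (hM : IsPM G M)
    (hN : IsPM G N) (hle : ∑ e ∈ M, c e ≤ ∑ e ∈ N, c e) :
    ∃ F, IsPM G F ∧ ∑ e ∈ F, c e ≤ ∑ e ∈ N, c e ∧ ∑ e ∈ F, c e ≡ ∑ e ∈ M, c e [ZMOD 2] ∧
      ∑ e ∈ N, c e - ∑ e ∈ F, c e ≤ 8 * 4 ^ G.indepNum := by
  obtain ⟨F, ⟨hF, hFN, hFM⟩, hmax⟩ := Set.exists_max_image
    {F | IsPM G F ∧ ∑ e ∈ F, c e ≤ ∑ e ∈ N, c e ∧ ∑ e ∈ F, c e ≡ ∑ e ∈ M, c e [ZMOD 2]}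
    (fun F => ∑ e ∈ F, c e) (Set.toFinite _) ⟨M, hM, hle, rfl⟩
  refine ⟨F, hF, hFN, hFM, ?_⟩
  by_contra! hgap
  obtain ⟨F', hF', hlt, hF'N, hF'F⟩ := exists_isPM_sum_modEq_of_lt_sum hc hF hN hgap
  exact (hmax F' ⟨hF', hF'N, hF'F.trans hFM⟩).not_gt hlt

lemma exists_isPM_sum_modEq_close_above (hc : ∀ e, c e ∈ Set.Icc 0 1) (hM : IsPM G M)
    (hN : IsPM G N) (hle : ∑ e ∈ N, c e ≤ ∑ e ∈ M, c e) :
    ∃ F, IsPM G F ∧ ∑ e ∈ N, c e ≤ ∑ e ∈ F, c e ∧ ∑ e ∈ F, c e ≡ ∑ e ∈ M, c e [ZMOD 2] ∧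
      ∑ e ∈ F, c e - ∑ e ∈ N, c e ≤ 8 * 4 ^ G.indepNum := by
  have := Fintype.ofFinite V
  have hcompl : ∀ F, IsPM G F → ∑ e ∈ F, (1 - c e) = #M - ∑ e ∈ F, c e := fun F hF => by
    have hcard : #F = #M := by have := hF.two_mul_card; have := hM.two_mul_card; omega
    rw [sum_sub_distrib, sum_const, nsmul_one, hcard]
  have hc' : ∀ e, 1 - c e ∈ Set.Icc 0 1 := fun e => by
    have := hc e
    simp only [Set.mem_Icc] at this ⊢
    omega
  obtain ⟨F, hF, hNF, hFM, hgap⟩ := exists_isPM_sum_modEq_close_below hc' hM hN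
    (by rw [hcompl M hM, hcompl N hN]; omega)
  rw [hcompl F hF, hcompl N hN] at hNF hgap
  rw [hcompl F hF, hcompl M hM] at hFM
  rw [Int.ModEq] at hFM
  exact ⟨F, hF, by omega, by rw [Int.ModEq]; omega, by omega⟩

end CloseParity

/-- The weight function of the coloring: red edges have weight `1` and blue edges weight `0`. -/
def redWeight {V : Type*} (red : Sym2 V → Bool) (e : Sym2 V) : ℤ := if red e then 1 else 0

lemma redWeight_mem_Icc {V : Type*} (red : Sym2 V → Bool) (e : Sym2 V) :
    redWeight red e ∈ Set.Icc 0 1 := by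
  rw [redWeight]
  split_ifs <;> simp

lemma sum_redWeight {V : Type*} [DecidableEq V] (red : Sym2 V → Bool) (F : Finset (Sym2 V)) :
    ∑ e ∈ F, redWeight red e = redCount red F := by
  simp only [redWeight, redCount, sum_boole]

/-- Given a "Yes" instance of Exact Matching (a PM with exactly `k` red edges exists) and
two PMs `M`, `M'` with `r(M) ≤ k ≤ r(M')`, there are PMs `M1`, `M2` with
`r(M1) ≤ k ≤ r(M2)`, `r(M1) ≡ r(M) (mod 2)`, `r(M2) ≡ r(M') (mod 2)` and
`r(M2) − r(M1) ≤ 16·4^α`. -/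
theorem close_parity_matchings
    {V : Type*} [Fintype V] [DecidableEq V] (G : SimpleGraph V) (red : Sym2 V → Bool)
    (k : ℕ) (hyes : ∃ M : Finset (Sym2 V), IsPM G M ∧ redCount red M = k)
    (M M' : Finset (Sym2 V)) (hM : IsPM G M) (hM' : IsPM G M')
    (hle : redCount red M ≤ k) (hge : k ≤ redCount red M') :
    ∃ M1 M2 : Finset (Sym2 V), IsPM G M1 ∧ IsPM G M2 ∧
      redCount red M1 ≤ k ∧ k ≤ redCount red M2 ∧
      redCount red M1 ≡ redCount red M [MOD 2] ∧
      redCount red M2 ≡ redCount red M' [MOD 2] ∧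
      (redCount red M2 : ℤ) - (redCount red M1 : ℤ) ≤ 16 * 4 ^ indepNum G := by
  obtain ⟨N, hN, rfl⟩ := hyes
  have hw := redWeight_mem_Icc red
  obtain ⟨M1, hM1, hM1N, hparity1, hgap1⟩ := exists_isPM_sum_modEq_close_below hw hM hN
    (by simpa only [sum_redWeight, Nat.cast_le] using hle)
  obtain ⟨M2, hM2, hNM2, hparity2, hgap2⟩ := exists_isPM_sum_modEq_close_above hw hM' hN
    (by simpa only [sum_redWeight, Nat.cast_le] using hge)
  simp only [sum_redWeight] at hM1N hparity1 hgap1 hNM2 hparity2 hgap2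
  refine ⟨M1, M2, hM1, hM2, Nat.cast_le.mp hM1N, Nat.cast_le.mp hNM2,
    (Int.natCast_modEq_iff (n := 2)).mp hparity1, (Int.natCast_modEq_iff (n := 2)).mp hparity2, ?_⟩
  rw [indepNum_eq_simpleGraph_indepNum]
  linarith
end
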